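/- arXiv:2407.17147 — 2 statements merged into one kernel-verified Lean document; each statement's English description precedes it below -/
import Mathlib

section
/- Let Q be a finite acyclic quiver and Λ an Artin algebra. The composite mono(Q,Λ) → rep(Q, mod Λ) → rep(Q, stable-mod Λ) induces a functor Φ from the injectively stable category of mono(Q,Λ) to rep(Q, stable-mod Λ), and Φ is an epivalence (a full and dense functor which reflects isomorphisms). Moreover, if Q has at least one arrow, then Φ is an equivalence if and only if Λ has global dimension at most 1. -/
/-! Basic framework: representations of a quiver over a ring. -/

namespace QuivRep

/-- A representation of a quiver `V` over a ring `Λ`. -/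
structure Repn (Λ : Type) [Ring Λ] (V : Type) [Quiver.{1} V] where
  M : V → Type
  [acg : ∀ i, AddCommGroup (M i)]
  [mod : ∀ i, Module Λ (M i)]
  h : ∀ {i j : V}, (i ⟶ j) → (M i →ₗ[Λ] M j)

attribute [instance] Repn.acg Repn.mod

variable {Λ : Type} [Ring Λ] {V : Type} [Quiver.{1} V]

/-- A morphism of representations. -/
@[ext]
structure RepHom (X Y : Repn Λ V) where
  app : ∀ i, X.M i →ₗ[Λ] Y.M i
  comm : ∀ {i j : V} (a : i ⟶ j), (Y.h a).comp (app i) = (app j).comp (X.h a)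

namespace RepHom

def id (X : Repn Λ V) : RepHom X X :=
  ⟨fun _ => LinearMap.id, fun _ => rfl⟩

def comp {X Y Z : Repn Λ V} (g : RepHom Y Z) (f : RepHom X Y) : RepHom X Z :=
  ⟨fun i => (g.app i).comp (f.app i), fun a => by
    rw [← LinearMap.comp_assoc, g.comm a, LinearMap.comp_assoc, f.comm a,
      LinearMap.comp_assoc]⟩

instance (X Y : Repn Λ V) : Zero (RepHom X Y) :=
  ⟨⟨fun _ => 0, fun a => by simp⟩⟩

end RepHom

/-- Isomorphism of representations. -/
def RepIso (X Y : Repn Λ V) : Prop :=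
  ∃ (f : RepHom X Y) (g : RepHom Y X), g.comp f = RepHom.id X ∧ f.comp g = RepHom.id Y

/-- The zero representation predicate. -/
def Repn.IsZero (X : Repn Λ V) : Prop := ∀ i, Subsingleton (X.M i)

/-- Indecomposability, via idempotent endomorphisms. -/
def Repn.Indec (X : Repn Λ V) : Prop :=
  ¬ X.IsZero ∧ ∀ e : RepHom X X, e.comp e = e → e = RepHom.id X ∨ e = 0

/-- Finitely generated (pointwise) representations. -/
def Repn.FG (X : Repn Λ V) : Prop := ∀ i, Module.Finite Λ (X.M i)

variable [Fintype V] [∀ i j : V, Fintype (i ⟶ j)]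

/-- The canonical map `⊕_{α : t(α) = i} M_{s(α)} → M_i` of a representation. -/
noncomputable def Repn.inMap (X : Repn Λ V) (i : V) :
    ((a : Σ j : V, j ⟶ i) → X.M a.1) →ₗ[Λ] X.M i :=
  ∑ a : (Σ j : V, j ⟶ i), (X.h a.2).comp (LinearMap.proj a)

/-- The (separated) monomorphism condition. -/
def Repn.IsMonoRep (X : Repn Λ V) : Prop := ∀ i : V, Function.Injective (X.inMap i)

/-- A quiver is acyclic if it has no nontrivial cycles. -/
def IsAcyclic (V : Type) [Quiver.{1} V] : Prop :=
  ∀ (i : V) (p : Quiver.Path i i), p = Quiver.Path.nil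

/-- `f, g` form a short exact sequence of representations (computed vertexwise). -/
def IsSES {X Y Z : Repn Λ V} (f : RepHom X Y) (g : RepHom Y Z) : Prop :=
  (∀ i, Function.Injective (f.app i)) ∧ (∀ i, Function.Surjective (g.app i)) ∧
    (∀ i, LinearMap.range (f.app i) = LinearMap.ker (g.app i))

end QuivRep

namespace QuivRep

variable {Λ : Type} [Ring Λ] {V : Type} [Quiver.{1} V]

/-- A linear map factors through an injective `Λ`-module. -/
def FactorsThroughInj (Λ : Type) [Ring Λ] {A B : Type} [AddCommGroup A] [Module Λ A]
    [AddCommGroup B] [Module Λ B] (f : A →ₗ[Λ] B) : Prop :=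
  ∃ (J : ModuleCat.{0} Λ), Module.Injective Λ J ∧
    ∃ (u : A →ₗ[Λ] J) (v : J →ₗ[Λ] B), v.comp u = f

/-- Equality in the injectively stable category `stable-mod Λ`. -/
def StEq (Λ : Type) [Ring Λ] {A B : Type} [AddCommGroup A] [Module Λ A]
    [AddCommGroup B] [Module Λ B] (f g : A →ₗ[Λ] B) : Prop :=
  FactorsThroughInj Λ (f - g)

/-- A morphism in `rep(Q, stable-mod Λ)` between (the images of) two representations:
a family of morphisms in `stable-mod Λ` making all arrow squares commute in `stable-mod Λ`. -/
def StRepHom (X Y : Repn Λ V) :=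
  { φ : ∀ i, X.M i →ₗ[Λ] Y.M i //
    ∀ (i j : V) (a : i ⟶ j), StEq Λ ((Y.h a).comp (φ i)) ((φ j).comp (X.h a)) }

/-- Two families are equal as morphisms of `rep(Q, stable-mod Λ)`. -/
def StFamEq {X Y : Repn Λ V} (φ ψ : ∀ i, X.M i →ₗ[Λ] Y.M i) : Prop :=
  ∀ i, StEq Λ (φ i) (ψ i)

/-- `X` and `Y` become isomorphic in `rep(Q, stable-mod Λ)`. -/
def StRepIso (X Y : Repn Λ V) : Prop :=
  ∃ (φ : StRepHom X Y) (ψ : StRepHom Y X),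
    (∀ i, StEq Λ ((ψ.1 i).comp (φ.1 i)) LinearMap.id) ∧
    (∀ i, StEq Λ ((φ.1 i).comp (ψ.1 i)) LinearMap.id)

variable [Fintype V] [∀ i j : V, Fintype (i ⟶ j)]

def Repn.InMono (X : Repn Λ V) : Prop := X.FG ∧ X.IsMonoRep

def IsSplitMono {X Y : Repn Λ V} (f : RepHom X Y) : Prop :=
  ∃ r : RepHom Y X, r.comp f = RepHom.id X

/-- `X` is an injective object of `mono(Q,Λ)`. -/
def InjInMono (X : Repn Λ V) : Prop :=
  ∀ (E N : Repn Λ V), N.InMono →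
    ∀ (f : RepHom X E) (g : RepHom E N), IsSES f g → IsSplitMono f

/-- `f` and `g` are equal in the injectively stable category of `mono(Q,Λ)`, i.e. their
difference factors through an injective object of `mono(Q,Λ)`. -/
def MonoStEq {X Y : Repn Λ V} (f g : RepHom X Y) : Prop :=
  ∃ (Z : Repn Λ V), Z.InMono ∧ InjInMono Z ∧
    ∃ (u : RepHom X Z) (v : RepHom Z Y),
      ∀ i, (v.comp u).app i = f.app i - g.app i

/-- Fullness of the functor `Φ : stable-mono(Q,Λ) → rep(Q, stable-mod Λ)`. -/
def PhiFull (Λ : Type) [Ring Λ] (V : Type) [Quiver.{1} V] [Fintype V]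
    [∀ i j : V, Fintype (i ⟶ j)] : Prop :=
  ∀ X Y : Repn Λ V, X.InMono → Y.InMono → ∀ φ : StRepHom X Y,
    ∃ f : RepHom X Y, StFamEq (fun i => f.app i) φ.1

/-- Density (essential surjectivity) of `Φ`. -/
def PhiDense (Λ : Type) [Ring Λ] (V : Type) [Quiver.{1} V] [Fintype V]
    [∀ i j : V, Fintype (i ⟶ j)] : Prop :=
  ∀ Z : Repn Λ V, Z.FG → ∃ X : Repn Λ V, X.InMono ∧ StRepIso Z X

/-- `Φ` reflects isomorphisms. -/
def PhiReflectsIsos (Λ : Type) [Ring Λ] (V : Type) [Quiver.{1} V] [Fintype V]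
    [∀ i j : V, Fintype (i ⟶ j)] : Prop :=
  ∀ X Y : Repn Λ V, X.InMono → Y.InMono → ∀ f : RepHom X Y,
    (∃ ψ : StRepHom Y X,
      (∀ i, StEq Λ ((ψ.1 i).comp (f.app i)) LinearMap.id) ∧
      (∀ i, StEq Λ ((f.app i).comp (ψ.1 i)) LinearMap.id)) →
    ∃ g : RepHom Y X, MonoStEq (g.comp f) (RepHom.id X) ∧ MonoStEq (f.comp g) (RepHom.id Y)

/-- Faithfulness of `Φ`. -/
def PhiFaithful (Λ : Type) [Ring Λ] (V : Type) [Quiver.{1} V] [Fintype V]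
    [∀ i j : V, Fintype (i ⟶ j)] : Prop :=
  ∀ X Y : Repn Λ V, X.InMono → Y.InMono → ∀ f g : RepHom X Y,
    StFamEq (fun i => f.app i) (fun i => g.app i) → MonoStEq f g

end QuivRep


set_option linter.all false

namespace QuivRep

section ModuleTheory

variable {Λ : Type} [Ring Λ]

lemma exists_injective_embedding (A : Type) [AddCommGroup A] [Module Λ A] :
    ∃ (J : ModuleCat.{0} Λ) (u : A →ₗ[Λ] J), Module.Injective Λ J ∧ Function.Injective u := by
  let P := CategoryTheory.EnoughInjectives.presentation (ModuleCat.of Λ A)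
  obtain ⟨P⟩ := P
  have := P.injective
  refine ⟨P.J, P.f.hom, Module.injective_module_of_injective_object _ _, ?_⟩
  exact (ModuleCat.mono_iff_injective P.f).1 P.mono

lemma injective_of_retract {A B : Type*} [AddCommGroup A] [Module Λ A]
    [AddCommGroup B] [Module Λ B] (hB : Module.Injective Λ B) (s : A →ₗ[Λ] B) (r : B →ₗ[Λ] A)
    (h : r.comp s = LinearMap.id) : Module.Injective Λ A := by
  refine ⟨fun X Y _ _ _ _ f hf g => ?_⟩
  obtain ⟨k, hk⟩ := Module.Injective.extension_property Λ B X Y f hf (s.comp g)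
  refine ⟨r.comp k, fun x => ?_⟩
  have hk' : k (f x) = s (g x) := LinearMap.congr_fun hk x
  simp only [LinearMap.comp_apply, hk']
  exact LinearMap.congr_fun h (g x)

lemma injective_prod {A B : Type*} [AddCommGroup A] [Module Λ A]
    [AddCommGroup B] [Module Λ B] (hA : Module.Injective Λ A) (hB : Module.Injective Λ B) :
    Module.Injective Λ (A × B) := by
  refine ⟨fun X Y _ _ _ _ f hf g => ?_⟩
  obtain ⟨k, hk⟩ := Module.Injective.extension_property Λ A X Y f hf ((LinearMap.fst Λ A B).comp g)
  obtain ⟨l, hl⟩ := Module.Injective.extension_property Λ B X Y f hf ((LinearMap.snd Λ A B).comp g)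
  exact ⟨k.prod l, fun x => Prod.ext (LinearMap.congr_fun hk x) (LinearMap.congr_fun hl x)⟩

lemma injective_extend {A : Type*} [AddCommGroup A] [Module Λ A] (hA : Module.Injective Λ A)
    {X Y : Type*} [AddCommGroup X] [Module Λ X] [AddCommGroup Y] [Module Λ Y]
    (f : X →ₗ[Λ] Y) (hf : Function.Injective f) (g : X →ₗ[Λ] A) :
    ∃ k : Y →ₗ[Λ] A, ∀ x, k (f x) = g x := by
  obtain ⟨k, hk⟩ := Module.Injective.extension_property Λ A X Y f hf g
  exact ⟨k, fun x => LinearMap.congr_fun hk x⟩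

/-- Finite products indexed by a large type are small. -/
lemma exists_small_pi {ι : Type*} [Fintype ι] (M : ι → Type) [∀ a, AddCommGroup (M a)]
    [∀ a, Module Λ (M a)] : ∃ D : ModuleCat.{0} Λ, Nonempty (D ≃ₗ[Λ] ((a : ι) → M a)) :=
  ⟨ModuleCat.of Λ ((n : Fin (Fintype.card ι)) → M ((Fintype.equivFin ι).symm n)),
    ⟨LinearEquiv.piCongrLeft Λ M (Fintype.equivFin ι).symm⟩⟩

/-- Existence of essential injective extensions. -/
lemma exists_injective_hull (A : Type) [AddCommGroup A] [Module Λ A] :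
    ∃ (E : ModuleCat.{0} Λ) (u : A →ₗ[Λ] E), Module.Injective Λ E ∧ Function.Injective u ∧
      ∀ x : E, x ≠ 0 → ∃ r : Λ, r • x ≠ 0 ∧ r • x ∈ LinearMap.range u := by
  obtain ⟨I, u, hI, hu⟩ := exists_injective_embedding (Λ := Λ) A
  -- maximal essential extension of the image inside I
  let S : Set (Submodule Λ I) := {E | LinearMap.range u ≤ E ∧
    ∀ x ∈ E, x ≠ 0 → ∃ r : Λ, r • x ≠ 0 ∧ r • x ∈ LinearMap.range u}
  have hAS : LinearMap.range u ∈ S := ⟨le_rfl, fun x hx h0 => ⟨1, by simpa using h0, by simpa using hx⟩⟩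
  obtain ⟨E, hAE, hE⟩ := zorn_le_nonempty₀ S (by
    intro c hc hchain y hy
    refine ⟨sSup c, ⟨(hc hy).1.trans (le_sSup hy), fun x hx h0 => ?_⟩, fun z hz => le_sSup hz⟩
    rw [Submodule.mem_sSup_of_directed ⟨y, hy⟩ hchain.directedOn] at hx
    obtain ⟨E, hEc, hxE⟩ := hx
    exact (hc hEc).2 x hxE h0) _ hAS
  -- maximal submodule disjoint from E
  let T : Set (Submodule Λ I) := {C | ∀ x ∈ C, x ∈ E → x = 0}
  obtain ⟨C, -, hC⟩ := zorn_le_nonempty₀ T (by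
    intro c hc hchain y hy
    refine ⟨sSup c, fun x hx hxE => ?_, fun z hz => le_sSup hz⟩
    rw [Submodule.mem_sSup_of_directed ⟨y, hy⟩ hchain.directedOn] at hx
    obtain ⟨C, hCc, hxC⟩ := hx
    exact hc hCc x hxC hxE) (⊥ : Submodule Λ I) (by intro x hx _; simpa using hx)
  have hinj : Function.Injective (C.mkQ.comp E.subtype) := by
    rw [injective_iff_map_eq_zero]
    intro x hx
    have : (x : I) ∈ C := by simpa using hx
    exact Subtype.ext (hC.prop x this x.2)
  obtain ⟨g, hg⟩ := hI.out _ hinj E.subtype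
  have hg' : ∀ x ∈ E, g (C.mkQ x) = x := fun x hx => hg ⟨x, hx⟩
  let p : I →ₗ[Λ] I := g.comp C.mkQ
  have hCp : C ≤ LinearMap.ker p := by
    intro x hx
    have : C.mkQ x = 0 := by simpa using hx
    rw [LinearMap.mem_ker, LinearMap.comp_apply, this, map_zero]
  have hker : LinearMap.ker p ≤ C := by
    refine hC.le_of_ge (y := LinearMap.ker p) ?_ hCp
    intro x hx hxE
    rw [← hg' x hxE]
    exact hx
  have hrange : LinearMap.range p ≤ E := by
    have hEle : E ≤ LinearMap.range p := fun x hx => ⟨x, hg' x hx⟩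
    refine hE.le_of_ge (y := LinearMap.range p) ⟨hE.prop.1.trans hEle, ?_⟩ hEle
    rintro _ ⟨y, rfl⟩ h0
    have hyC : y ∉ C := fun h => h0 (hCp h)
    have hnot : C ⊔ Submodule.span Λ {y} ∉ T := by
      intro h
      have := hC.le_of_ge h le_sup_left
      exact hyC (this (Submodule.mem_sup_right (Submodule.mem_span_singleton_self y)))
    simp only [T, Set.mem_ofPred_eq, not_forall] at hnot
    obtain ⟨e, he, heE, he0⟩ := hnot
    obtain ⟨c, hc, z, hz, rfl⟩ := Submodule.mem_sup.1 he
    obtain ⟨r, rfl⟩ := Submodule.mem_span_singleton.1 hz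
    have h1 : r • p y = c + r • y := by
      have h2 : p (c + r • y) = c + r • y := hg' _ heE
      rw [map_add, map_smul, LinearMap.mem_ker.1 (hCp hc), zero_add] at h2
      exact h2
    obtain ⟨s, hs, hs'⟩ := hE.prop.2 _ heE he0
    refine ⟨s * r, ?_, ?_⟩
    · rwa [mul_smul, h1]
    · rwa [mul_smul, h1]
  refine ⟨ModuleCat.of Λ E, LinearMap.codRestrict E u (fun x => hE.prop.1 ⟨x, rfl⟩), ?_, ?_, ?_⟩
  · refine injective_of_retract hI E.subtype (LinearMap.codRestrict E p (fun x => hrange ⟨x, rfl⟩)) ?_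
    ext x
    exact hg' x x.2
  · intro x y h
    exact hu (congrArg Subtype.val h)
  · intro x hx
    obtain ⟨r, h1, ⟨a, ha⟩⟩ := hE.prop.2 x.1 x.2 (fun h => hx (Subtype.ext h))
    exact ⟨r, fun h => h1 (congrArg Subtype.val h), a, Subtype.ext ha⟩

/-- Over an Artin algebra a finitely generated module embeds in a finitely generated
injective module. -/
lemma exists_fg_injective (R : Type) [CommRing R] [IsArtinianRing R]
    [Algebra R Λ] [Module.Finite R Λ] (A : Type) [AddCommGroup A] [Module Λ A]
    (hA : Module.Finite Λ A) :
    ∃ (E : ModuleCat.{0} Λ) (u : A →ₗ[Λ] E), Module.Injective Λ E ∧ Function.Injective u ∧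
      Module.Finite Λ E := by
  obtain ⟨E, u, hE, hu, hess⟩ := exists_injective_hull (Λ := Λ) A
  refine ⟨E, u, hE, hu, ?_⟩
  have : IsArtinianRing Λ := IsArtinianRing.of_finite R Λ
  have hsp : IsSemiprimaryRing Λ := inferInstance
  let : Module R E := Module.compHom E (algebraMap R Λ)
  let : Module R A := Module.compHom A (algebraMap R Λ)
  have : IsScalarTower R Λ E := IsScalarTower.of_algebraMap_smul fun _ _ => rfl
  have : IsScalarTower R Λ A := IsScalarTower.of_algebraMap_smul fun _ _ => rfl
  have : Module.Finite R A := Module.Finite.trans Λ A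
  let J := Ring.jacobson Λ
  obtain ⟨-, n, hn⟩ := (isSemiprimaryRing_iff Λ).1 hsp
  -- the socle
  let S : Submodule Λ E :=
    { carrier := {x | ∀ r ∈ J, r • x = 0}
      add_mem' := fun {a b} ha hb r hr => by rw [smul_add, ha r hr, hb r hr, add_zero]
      zero_mem' := fun r _ => smul_zero r
      smul_mem' := fun c x hx r hr => by
        rw [← mul_smul]
        exact hx _ (Ideal.IsTwoSided.mul_mem_of_left c hr) }
  have htors : Module.IsTorsionBySet Λ S J := by
    intro x r
    exact Subtype.ext (x.2 r.1 r.2)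
  have hss : IsSemisimpleModule Λ S := by
    let := htors.module
    exact htors.isSemisimpleModule_iff.1 inferInstance
  have hSA : S ≤ LinearMap.range u := by
    obtain ⟨C, hC⟩ := exists_isCompl ((LinearMap.range u).comap S.subtype)
    have hC0 : C = ⊥ := by
      rw [eq_bot_iff]
      intro x hx
      by_contra h0
      have hx0 : (x : E) ≠ 0 := fun h => h0 (by rw [Submodule.mem_bot]; exact Subtype.ext h)
      obtain ⟨r, hr, hr'⟩ := hess x hx0
      have h1 : r • x ∈ (LinearMap.range u).comap S.subtype ⊓ C :=
        ⟨hr', C.smul_mem r hx⟩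
      rw [hC.inf_eq_bot, Submodule.mem_bot] at h1
      exact hr (congrArg Subtype.val h1)
    have htop := hC.sup_eq_top
    rw [hC0, sup_bot_eq] at htop
    intro x hx
    have : (⟨x, hx⟩ : S) ∈ (LinearMap.range u).comap S.subtype := by rw [htop]; trivial
    exact this
  have hSfg : (S.restrictScalars R).FG := by
    have h1 : ((LinearMap.range u).restrictScalars R) = LinearMap.range (u.restrictScalars R) := rfl
    have h2 : ((LinearMap.range u).restrictScalars R).FG := by
      rw [h1]; exact Submodule.FG.of_finite
    exact h2.of_le hSA
  -- filtration
  have hJfg : (J.restrictScalars R).FG := IsNoetherian.noetherian _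
  obtain ⟨m, g, hg⟩ := Submodule.fg_iff_exists_fin_generating_family.1 hJfg
  have hgJ : ∀ i, g i ∈ J := fun i => by
    have : g i ∈ J.restrictScalars R := by rw [← hg]; exact Submodule.subset_span ⟨i, rfl⟩
    exact this
  let F : ℕ → Submodule R E := fun k =>
    { carrier := {x | ∀ r ∈ J ^ k, r • x = 0}
      add_mem' := fun {a b} ha hb r hr => by rw [smul_add, ha r hr, hb r hr, add_zero]
      zero_mem' := fun r _ => smul_zero r
      smul_mem' := fun c x hx r hr => by
        have : r • c • x = c • r • x := smul_comm r c x
        rw [this, hx r hr, smul_zero] }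
  have : SMulCommClass R Λ E := inferInstance
  let L : Λ → (E →ₗ[R] E) := fun a =>
    { toFun := fun x => a • x
      map_add' := fun x y => smul_add a x y
      map_smul' := fun c x => smul_comm a c x }
  let φ : E →ₗ[R] (Fin m → E) := LinearMap.pi fun i => L (g i)
  have hF : ∀ k, (F k).FG := by
    intro k
    induction k with
    | zero =>
      have : F 0 = ⊥ := by
        rw [eq_bot_iff]
        intro x hx
        have := hx 1 (by rw [Submodule.pow_zero, Ideal.one_eq_top]; trivial)
        simpa using this
      rw [this]; exact Submodule.fg_bot
    | succ k ih =>
      refine Submodule.fg_of_fg_map_of_fg_inf_ker φ ?_ ?_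
      · refine Submodule.FG.of_le (Submodule.fg_pi (p := fun _ : Fin m => F k) fun _ => ih) ?_
        rintro _ ⟨x, hx, rfl⟩
        intro i _ r hr
        change r • g i • x = 0
        rw [← mul_smul]
        refine hx _ ?_
        rw [Submodule.pow_succ]
        exact Submodule.mul_mem_mul hr (hgJ i)
      · refine hSfg.of_le ?_
        rintro x ⟨-, hx⟩
        intro r hr
        have hr' : r ∈ Submodule.span R (Set.range g) := by rw [hg]; exact hr
        induction hr' using Submodule.span_induction with
        | mem r h =>
          obtain ⟨i, rfl⟩ := h
          exact congrFun (LinearMap.mem_ker.1 hx) i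
        | zero => exact zero_smul _ _
        | add a b ha hb h1 h2 =>
          rw [hg] at ha hb
          rw [add_smul, h1 ha, h2 hb, add_zero]
        | smul c a ha h1 =>
          rw [hg] at ha
          rw [smul_assoc, h1 ha, smul_zero]
  have hFn : F n = ⊤ := by
    rw [eq_top_iff]
    intro x _ r hr
    have : r ∈ (Ring.jacobson Λ) ^ n := hr
    rw [hn] at this
    have : r = 0 := by simpa using this
    rw [this, zero_smul]
  have : Module.Finite R E := ⟨hFn ▸ hF n⟩
  exact Module.Finite.of_restrictScalars_finite R Λ E

/-- hereditary: quotients of injectives are injective -/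
lemma injective_of_surjective_of_hereditary (hΛ : ∀ I : Submodule Λ Λ, Module.Projective Λ I)
    {A B : Type} [AddCommGroup A] [Module Λ A] [AddCommGroup B] [Module Λ B]
    (hA : Module.Injective Λ A) (q : A →ₗ[Λ] B) (hq : Function.Surjective q) :
    Module.Injective Λ B := by
  refine Module.Baer.injective fun I g => ?_
  have := hΛ I
  obtain ⟨k, hk⟩ := Module.projective_lifting_property q g hq
  obtain ⟨l, hl⟩ := (Module.Baer.of_injective hA) I k
  refine ⟨q.comp l, fun x hx => ?_⟩
  rw [LinearMap.comp_apply, hl x hx, ← LinearMap.comp_apply, hk]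

/-- If quotients of f.g. injectives are injective then left ideals are projective. -/
lemma projective_of_quotients_injective (R : Type) [CommRing R] [IsArtinianRing R]
    [Algebra R Λ] [Module.Finite R Λ]
    (h : ∀ (E : ModuleCat.{0} Λ), Module.Injective Λ E → Module.Finite Λ E →
      ∀ K : Submodule Λ E, Module.Injective Λ (E ⧸ K)) (I : Submodule Λ Λ) :
    Module.Projective Λ I := by
  have : IsArtinianRing Λ := IsArtinianRing.of_finite R Λ
  have hI : Module.Finite Λ I := inferInstance
  obtain ⟨n, q, hq⟩ := Module.Finite.exists_fin' Λ I
  obtain ⟨E, u, hE, hu, hEf⟩ := exists_fg_injective (Λ := Λ) R (Fin n → Λ) inferInstance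
  let K := (LinearMap.ker q).map u
  have hK := h E hE hEf K
  -- I → E/K
  have hle : LinearMap.ker q ≤ LinearMap.ker (K.mkQ.comp u) := by
    intro x hx
    rw [LinearMap.mem_ker, LinearMap.comp_apply]
    exact (Submodule.Quotient.mk_eq_zero K).2 ⟨x, hx, rfl⟩
  let e := q.quotKerEquivOfSurjective hq
  let w : I →ₗ[Λ] (E ⧸ K) := ((LinearMap.ker q).liftQ _ hle).comp e.symm.toLinearMap
  have hw : ∀ x, w (q x) = K.mkQ (u x) := by
    intro x
    have : e.symm (q x) = (LinearMap.ker q).mkQ x := by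
      rw [LinearEquiv.symm_apply_eq]; rfl
    simp only [w, LinearMap.comp_apply, LinearEquiv.coe_coe, this]
    rfl
  obtain ⟨w', hw'⟩ := hK.out I.subtype (Submodule.subtype_injective I) w
  obtain ⟨l, hl⟩ := Module.projective_lifting_property K.mkQ w' K.mkQ_surjective
  have hlr : ∀ x : I, l x ∈ LinearMap.range u := by
    intro x
    obtain ⟨y, rfl⟩ := hq x
    have h1 : K.mkQ (l (q y)) = K.mkQ (u y) := by
      rw [← hw, ← hw', ← LinearMap.comp_apply, hl]; rfl
    have h2 : l (q y) - u y ∈ K := by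
      exact (Submodule.Quotient.eq K).1 h1
    obtain ⟨z, -, hz⟩ := h2
    exact ⟨z + y, by rw [map_add, hz]; abel⟩
  let ue := LinearEquiv.ofInjective u hu
  let s : I →ₗ[Λ] (Fin n → Λ) :=
    ue.symm.toLinearMap.comp (LinearMap.codRestrict (LinearMap.range u) (l.comp I.subtype) hlr)
  have hs : ∀ x, u (s x) = l x := by
    intro x
    have : ue (s x) = ⟨l x, hlr x⟩ := by
      simp only [s, LinearMap.comp_apply, LinearEquiv.coe_coe, LinearEquiv.apply_symm_apply]
      rfl
    exact congrArg Subtype.val this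
  refine Module.Projective.of_split s q ?_
  ext x
  obtain ⟨y, rfl⟩ := hq x
  have h1 : K.mkQ (u (s (q y))) = K.mkQ (u y) := by
    rw [hs, ← hw, ← hw', ← LinearMap.comp_apply, hl]; rfl
  have h2 : u (s (q y)) - u y ∈ K := by
    exact (Submodule.Quotient.eq K).1 h1
  obtain ⟨z, hz, hz'⟩ := h2
  rw [← map_sub] at hz'
  have := hu hz'
  rw [this] at hz
  have h3 : q (s (q y)) - q y = 0 := by rw [← map_sub]; exact hz
  simpa using congrArg Subtype.val (sub_eq_zero.1 h3)

end ModuleTheory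
end QuivRep


namespace QuivRep

section RepTheory

/-- Well-founded dependent choice. -/
lemma wf_choice {V : Type} {r : V → V → Prop} (hwf : WellFounded r) {A : V → Type*}
    (P : ∀ i, (∀ j, r j i → A j) → A i → Prop)
    (hex : ∀ i prev, ∃ x, P i prev x) :
    ∃ f : ∀ i, A i, ∀ i, P i (fun j _ => f j) (f i) := by
  choose F hF using hex
  refine ⟨hwf.fix F, fun i => ?_⟩
  have h := hF i (fun j _ => hwf.fix F j)
  rw [← hwf.fix_eq F i] at h
  exact h

lemma exists_factor_mono {Λ : Type} [Ring Λ] {X E D : Type*} [AddCommGroup X] [Module Λ X]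
    [AddCommGroup E] [Module Λ E] [AddCommGroup D] [Module Λ D] (f : X →ₗ[Λ] E)
    (hf : Function.Injective f) (δ : D →ₗ[Λ] E) (h : ∀ d, δ d ∈ LinearMap.range f) :
    ∃ w : D →ₗ[Λ] X, ∀ d, f (w d) = δ d := by
  let e := LinearEquiv.ofInjective f hf
  refine ⟨e.symm.toLinearMap.comp (LinearMap.codRestrict (LinearMap.range f) δ h), fun d => ?_⟩
  have : e (e.symm (LinearMap.codRestrict (LinearMap.range f) δ h d)) = ⟨δ d, h d⟩ := by
    rw [LinearEquiv.apply_symm_apply]; rfl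
  exact congrArg Subtype.val this

lemma exists_factor_epi {Λ : Type} [Ring Λ] {E N M : Type} [AddCommGroup N] [Module Λ N]
    [AddCommGroup E] [Module Λ E] [AddCommGroup M] [Module Λ M] (g : E →ₗ[Λ] N)
    (hg : Function.Surjective g) (δ : E →ₗ[Λ] M) (h : ∀ x, g x = 0 → δ x = 0) :
    ∃ w : N →ₗ[Λ] M, ∀ x, w (g x) = δ x := by
  let e := g.quotKerEquivOfSurjective hg
  refine ⟨((LinearMap.ker g).liftQ δ (fun x hx => h x hx)).comp e.symm.toLinearMap, fun x => ?_⟩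
  have : e.symm (g x) = (LinearMap.ker g).mkQ x := by
    rw [LinearEquiv.symm_apply_eq]; rfl
  simp only [LinearMap.comp_apply, LinearEquiv.coe_coe, this]
  rfl

section Factors
variable {Λ : Type} [Ring Λ] {A B C : Type} [AddCommGroup A] [Module Λ A]
    [AddCommGroup B] [Module Λ B] [AddCommGroup C] [Module Λ C]

lemma FactorsThroughInj.add {f g : A →ₗ[Λ] B} (hf : FactorsThroughInj Λ f)
    (hg : FactorsThroughInj Λ g) : FactorsThroughInj Λ (f + g) := by
  obtain ⟨J, hJ, u, v, rfl⟩ := hf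
  obtain ⟨J', hJ', u', v', rfl⟩ := hg
  refine ⟨ModuleCat.of Λ (J × J'), injective_prod hJ hJ', u.prod u', v.coprod v', ?_⟩
  ext x; simp

lemma FactorsThroughInj.neg {f : A →ₗ[Λ] B} (hf : FactorsThroughInj Λ f) :
    FactorsThroughInj Λ (-f) := by
  obtain ⟨J, hJ, u, v, rfl⟩ := hf
  exact ⟨J, hJ, u, -v, by ext x; simp⟩

lemma FactorsThroughInj.sub {f g : A →ₗ[Λ] B} (hf : FactorsThroughInj Λ f)
    (hg : FactorsThroughInj Λ g) : FactorsThroughInj Λ (f - g) := by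
  rw [sub_eq_add_neg]; exact hf.add hg.neg

lemma FactorsThroughInj.postcomp {f : A →ₗ[Λ] B} (hf : FactorsThroughInj Λ f) (g : B →ₗ[Λ] C) :
    FactorsThroughInj Λ (g.comp f) := by
  obtain ⟨J, hJ, u, v, rfl⟩ := hf
  exact ⟨J, hJ, u, g.comp v, rfl⟩

lemma FactorsThroughInj.precomp {f : B →ₗ[Λ] C} (hf : FactorsThroughInj Λ f) (g : A →ₗ[Λ] B) :
    FactorsThroughInj Λ (f.comp g) := by
  obtain ⟨J, hJ, u, v, rfl⟩ := hf
  exact ⟨J, hJ, u.comp g, v, rfl⟩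

lemma factors_of_injective {B : Type*} [AddCommGroup B] [Module Λ B]
    (hB : Module.Injective Λ B) (f : A →ₗ[Λ] B) (g : B →ₗ[Λ] C) :
    FactorsThroughInj Λ (g.comp f) := by
  obtain ⟨J, u, hJ, hu⟩ := exists_injective_embedding (Λ := Λ) A
  obtain ⟨k, hk⟩ := injective_extend hB u hu f
  exact ⟨J, hJ, u, g.comp k, by ext x; simp [hk]⟩

lemma FactorsThroughInj.pi {ι : Type*} [Fintype ι] {M : ι → Type} [∀ i, AddCommGroup (M i)]
    [∀ i, Module Λ (M i)] (f : ∀ i, M i →ₗ[Λ] B) (hf : ∀ i, FactorsThroughInj Λ (f i)) :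
    ∃ (J : ModuleCat.{0} Λ) (u : (∀ i, M i) →ₗ[Λ] J) (v : J →ₗ[Λ] B), Module.Injective Λ J ∧
      ∀ x, v (u x) = ∑ i, f i (x i) := by
  choose J hJ u v h using hf
  obtain ⟨D, ⟨e⟩⟩ := exists_small_pi (Λ := Λ) (fun i => (J i : Type))
  have := hJ
  refine ⟨D, e.symm.toLinearMap.comp (LinearMap.pi fun i => (u i).comp (LinearMap.proj i)),
    (∑ i, (v i).comp (LinearMap.proj i)).comp e.toLinearMap,
    injective_of_retract (Module.Injective.pi Λ (fun i => (J i : Type))) e.toLinearMap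
      e.symm.toLinearMap (by ext x; simp), ?_⟩
  intro x
  simp only [LinearMap.comp_apply, LinearMap.sum_apply, ← h, LinearEquiv.coe_coe,
    LinearEquiv.apply_symm_apply]
  rfl

end Factors

variable {Λ : Type} [Ring Λ] {V : Type} [Quiver.{1} V]

lemma exists_pos_path_irrefl (h : IsAcyclic V) (i : V) :
    ¬ ∃ p : Quiver.Path i i, 0 < p.length := by
  rintro ⟨p, hp⟩
  rw [h i p] at hp
  simp at hp

lemma wf_arrow [Fintype V] (h : IsAcyclic V) : WellFounded (fun j i : V => Nonempty (j ⟶ i)) := by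
  let r : V → V → Prop := fun j i => ∃ p : Quiver.Path j i, 0 < p.length
  have : IsTrans V r := ⟨fun a b c ⟨p, hp⟩ ⟨q, hq⟩ => ⟨p.comp q, by simp; omega⟩⟩
  have : Std.Irrefl r := ⟨exists_pos_path_irrefl h⟩
  have hwf : WellFounded r := Finite.wellFounded_of_trans_of_irrefl r
  exact Subrelation.wf (fun {a b} ⟨e⟩ => ⟨Quiver.Hom.toPath e, by simp⟩) hwf

lemma wf_arrow_op [Fintype V] (h : IsAcyclic V) :
    WellFounded (fun i j : V => Nonempty (j ⟶ i)) := by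
  let r : V → V → Prop := fun i j => ∃ p : Quiver.Path j i, 0 < p.length
  have : IsTrans V r := ⟨fun a b c ⟨p, hp⟩ ⟨q, hq⟩ => ⟨q.comp p, by simp; omega⟩⟩
  have : Std.Irrefl r := ⟨exists_pos_path_irrefl h⟩
  have hwf : WellFounded r := Finite.wellFounded_of_trans_of_irrefl r
  exact Subrelation.wf (fun {a b} ⟨e⟩ => ⟨Quiver.Hom.toPath e, by simp⟩) hwf

variable [Fintype V] [∀ i j : V, Fintype (i ⟶ j)]

lemma inMap_apply (X : Repn Λ V) (i : V) (y : (a : Σ j : V, j ⟶ i) → X.M a.1) :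
    X.inMap i y = ∑ a, X.h a.2 (y a) := by
  simp [Repn.inMap]

open Classical in
lemma inMap_single (X : Repn Λ V) (i : V) (a : Σ j : V, j ⟶ i) (x : X.M a.1) :
    X.inMap i (Pi.single a x) = X.h a.2 x := by
  rw [inMap_apply, Finset.sum_eq_single a]
  · rw [Pi.single_eq_same]
  · intro b _ hb
    rw [Pi.single_eq_of_ne hb, map_zero]
  · simp

lemma inMap_comm {X Y : Repn Λ V} (f : RepHom X Y) (i : V)
    (y : (a : Σ j : V, j ⟶ i) → X.M a.1) :
    f.app i (X.inMap i y) = Y.inMap i (fun a => f.app a.1 (y a)) := by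
  rw [inMap_apply, inMap_apply, map_sum]
  refine Finset.sum_congr rfl fun a _ => ?_
  exact (LinearMap.congr_fun (f.comm a.2) (y a)).symm

/-- Build a morphism from compatibility with the maps `inMap`. -/
def mkHom {X Y : Repn Λ V} (φ : ∀ i, X.M i →ₗ[Λ] Y.M i)
    (h : ∀ i y, φ i (X.inMap i y) = Y.inMap i (fun a => φ a.1 (y a))) : RepHom X Y where
  app := φ
  comm := by
    classical
    intro i j a
    ext x
    have := h j (Pi.single ⟨i, a⟩ x)
    rw [inMap_single] at this
    simp only [LinearMap.comp_apply]
    rw [this, inMap_apply, Finset.sum_eq_single ⟨i, a⟩]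
    · simp only [Pi.single_eq_same]
    · intro b _ hb
      rw [Pi.single_eq_of_ne hb, map_zero, map_zero]
    · simp

open Classical in
/-- Build a representation from its maps `inMap`. -/
noncomputable def mkRep (M : V → Type) [∀ i, AddCommGroup (M i)] [∀ i, Module Λ (M i)]
    (m : ∀ i, ((a : Σ j : V, j ⟶ i) → M a.1) →ₗ[Λ] M i) : Repn Λ V where
  M := M
  h := fun {i j} a => (m j).comp (LinearMap.single Λ (fun b : Σ k : V, k ⟶ j => M b.1) ⟨i, a⟩)

lemma inMap_mkRep (M : V → Type) [∀ i, AddCommGroup (M i)] [∀ i, Module Λ (M i)]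
    (m : ∀ i, ((a : Σ j : V, j ⟶ i) → M a.1) →ₗ[Λ] M i) (i : V) :
    (mkRep M m).inMap i = m i := by
  classical
  refine LinearMap.ext fun y => ?_
  rw [inMap_apply]
  change ∑ a : Σ j : V, j ⟶ i, m i (Pi.single a (y a)) = m i y
  rw [← map_sum]
  congr 1
  exact Finset.univ_sum_single y

/-- The projection `g` of a short exact sequence has a section under suitable conditions. -/
lemma exists_section (hwf : WellFounded (fun j i : V => Nonempty (j ⟶ i)))
    {X E N : Repn Λ V} (f : RepHom X E) (g : RepHom E N) (hS : IsSES f g)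
    (hσ : ∀ i, ∃ ρ : E.M i →ₗ[Λ] X.M i, ∀ x, ρ (f.app i x) = x)
    (hext : ∀ i (w : ((a : Σ j : V, j ⟶ i) → N.M a.1) →ₗ[Λ] X.M i),
      ∃ w' : N.M i →ₗ[Λ] X.M i, ∀ y, w' (N.inMap i y) = w y) :
    ∃ s : RepHom N E, ∀ i x, g.app i (s.app i x) = x := by
  obtain ⟨hf, hg, hfg⟩ := hS
  have hgf : ∀ i x, g.app i (f.app i x) = 0 := by
    intro i x
    have : f.app i x ∈ LinearMap.ker (g.app i) := by rw [← hfg]; exact ⟨x, rfl⟩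
    exact this
  have hsec : ∀ i, ∃ σ : N.M i →ₗ[Λ] E.M i, ∀ x, g.app i (σ x) = x := by
    intro i
    obtain ⟨ρ, hρ⟩ := hσ i
    obtain ⟨σ, hσ⟩ := exists_factor_epi (g.app i) (hg i)
      (LinearMap.id - (f.app i).comp ρ) (by
        intro x hx
        have : x ∈ LinearMap.range (f.app i) := by rw [hfg]; exact hx
        obtain ⟨y, rfl⟩ := this
        simp [hρ])
    refine ⟨σ, fun x => ?_⟩
    obtain ⟨y, rfl⟩ := hg i x
    rw [hσ]
    simp [hgf]
  obtain ⟨s, hs⟩ := wf_choice hwf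
    (A := fun i => {s : N.M i →ₗ[Λ] E.M i // ∀ x, g.app i (s x) = x})
    (fun i prev s => ∀ y : ((a : Σ j : V, j ⟶ i) → N.M a.1),
      s.1 (N.inMap i y) = E.inMap i (fun a => (prev a.1 ⟨a.2⟩).1 (y a)))
    (by
      intro i prev
      obtain ⟨σ, hσ⟩ := hsec i
      let t : ((a : Σ j : V, j ⟶ i) → N.M a.1) →ₗ[Λ] E.M i :=
        (E.inMap i).comp (LinearMap.pi fun a => (prev a.1 ⟨a.2⟩).1.comp (LinearMap.proj a))
      have ht : ∀ y, t y = E.inMap i (fun a => (prev a.1 ⟨a.2⟩).1 (y a)) := fun y => rfl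
      have hgt : ∀ y, g.app i (t y) = N.inMap i y := by
        intro y
        rw [ht, inMap_comm]
        congr 1
        funext a
        exact (prev a.1 ⟨a.2⟩).2 (y a)
      obtain ⟨w, hw⟩ := exists_factor_mono (f.app i) (hf i) (σ.comp (N.inMap i) - t) (by
        intro y
        rw [hfg]
        simp [hσ, hgt])
      obtain ⟨w', hw'⟩ := hext i w
      refine ⟨⟨σ - (f.app i).comp w', fun x => ?_⟩, fun y => ?_⟩
      · simp [hσ, hgf]
      · simp only [LinearMap.sub_apply, LinearMap.comp_apply, hw', hw, ← ht]
        abel)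
  exact ⟨mkHom (fun i => (s i).1) hs, fun i => (s i).2⟩

lemma exists_retraction {X E N : Repn Λ V} (f : RepHom X E) (g : RepHom E N) (hS : IsSES f g)
    (s : RepHom N E) (hs : ∀ i x, g.app i (s.app i x) = x) :
    ∃ r : RepHom E X, (∀ i x, r.app i (f.app i x) = x) ∧
      ∀ i x, f.app i (r.app i x) = x - s.app i (g.app i x) := by
  obtain ⟨hf, hg, hfg⟩ := hS
  have hgf : ∀ i x, g.app i (f.app i x) = 0 := by
    intro i x
    have : f.app i x ∈ LinearMap.ker (g.app i) := by rw [← hfg]; exact ⟨x, rfl⟩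
    exact this
  have : ∀ i, ∃ r : E.M i →ₗ[Λ] X.M i, ∀ x, f.app i (r x) = x - s.app i (g.app i x) := by
    intro i
    exact exists_factor_mono (f.app i) (hf i) (LinearMap.id - (s.app i).comp (g.app i)) (by
      intro y
      rw [hfg]
      simp [hs])
  choose r hr using this
  refine ⟨⟨r, ?_⟩, ?_, hr⟩
  · intro i j a
    ext x
    apply hf
    simp only [LinearMap.comp_apply]
    rw [hr]
    have h1 := LinearMap.congr_fun (f.comm a) (r i x)
    have h2 := LinearMap.congr_fun (s.comm a) (g.app i x)
    have h3 := LinearMap.congr_fun (g.comm a) x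
    simp only [LinearMap.comp_apply] at h1 h2 h3
    rw [← h1, hr, map_sub, h2, h3]
  · intro i x
    apply hf
    change f.app i (r i _) = _
    rw [hr, hgf, map_zero, sub_zero]

/-- Representations with injective components are injective in `mono(Q,Λ)`. -/
lemma injInMono_of_injective (hwf : WellFounded (fun j i : V => Nonempty (j ⟶ i)))
    (X : Repn Λ V) (hX : ∀ i, Module.Injective Λ (X.M i)) : InjInMono X := by
  intro E N hN f g hS
  obtain ⟨s, hs⟩ := exists_section hwf f g hS
    (fun i => (hX i).out (f.app i) (hS.1 i) LinearMap.id)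
    (fun i w => injective_extend (hX i) (N.inMap i) (hN.2 i) w)
  obtain ⟨r, hr, -⟩ := exists_retraction f g hS s hs
  exact ⟨r, RepHom.ext (funext fun i => LinearMap.ext fun x => hr i x)⟩

/-- Cokernel representation. -/
def coker {X Y : Repn Λ V} (f : RepHom X Y) : Repn Λ V where
  M := fun i => Y.M i ⧸ LinearMap.range (f.app i)
  h := fun {i j} a => Submodule.mapQ _ _ (Y.h a) (by
    rintro _ ⟨x, rfl⟩
    exact ⟨X.h a x, (LinearMap.congr_fun (f.comm a) x).symm⟩)

def cokerπ {X Y : Repn Λ V} (f : RepHom X Y) : RepHom Y (coker f) where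
  app := fun i => (LinearMap.range (f.app i)).mkQ
  comm := fun a => by ext x; rfl

lemma coker_ses {X Y : Repn Λ V} (f : RepHom X Y) (hf : ∀ i, Function.Injective (f.app i)) :
    IsSES f (cokerπ f) :=
  ⟨hf, fun i => Submodule.mkQ_surjective _, fun i => (Submodule.ker_mkQ _).symm⟩

lemma coker_inMono {X Y : Repn Λ V} (f : RepHom X Y) (hY : Y.FG)
    (h : ∀ i (y : (a : Σ j : V, j ⟶ i) → Y.M a.1) x, Y.inMap i y = f.app i x →
      ∀ a, ∃ z, y a = f.app a.1 z) : (coker f).InMono := by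
  refine ⟨fun i => ?_, fun i => ?_⟩
  · have := hY i
    exact Module.Finite.quotient Λ (LinearMap.range (f.app i))
  · rw [injective_iff_map_eq_zero]
    intro c hc
    have : ∀ a, ∃ y : Y.M a.1, (cokerπ f).app a.1 y = c a :=
      fun a => Submodule.mkQ_surjective _ (c a)
    choose y hy using this
    have hcy : c = fun a => (cokerπ f).app a.1 (y a) := funext fun a => (hy a).symm
    rw [hcy, ← inMap_comm] at hc
    have h1 : Y.inMap i y ∈ LinearMap.range (f.app i) :=
      (Submodule.Quotient.mk_eq_zero _).1 hc
    obtain ⟨x, hx⟩ := h1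
    funext a
    obtain ⟨z, hz⟩ := h i y x hx.symm a
    rw [← hy a]
    exact (Submodule.Quotient.mk_eq_zero _).2 ⟨z, hz.symm⟩

/-- Product representation. -/
def prodRep (Y W : Repn Λ V) : Repn Λ V where
  M := fun i => Y.M i × W.M i
  h := fun a => (Y.h a).prodMap (W.h a)

def prodRep.fst (Y W : Repn Λ V) : RepHom (prodRep Y W) Y :=
  ⟨fun i => LinearMap.fst Λ _ _, fun a => rfl⟩
def prodRep.snd (Y W : Repn Λ V) : RepHom (prodRep Y W) W :=
  ⟨fun i => LinearMap.snd Λ _ _, fun a => rfl⟩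
def prodRep.inl (Y W : Repn Λ V) : RepHom Y (prodRep Y W) :=
  ⟨fun i => LinearMap.inl Λ _ _, fun a => LinearMap.ext fun x => Prod.ext rfl (map_zero (W.h a))⟩
def prodRep.inr (Y W : Repn Λ V) : RepHom W (prodRep Y W) :=
  ⟨fun i => LinearMap.inr Λ _ _, fun a => LinearMap.ext fun x => Prod.ext (map_zero (Y.h a)) rfl⟩
def prodRep.lift {X Y W : Repn Λ V} (f : RepHom X Y) (g : RepHom X W) :
    RepHom X (prodRep Y W) :=
  ⟨fun i => (f.app i).prod (g.app i), fun a => by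
    refine LinearMap.ext fun x => Prod.ext ?_ ?_
    · exact LinearMap.congr_fun (f.comm a) x
    · exact LinearMap.congr_fun (g.comm a) x⟩
def negHom {X Y : Repn Λ V} (f : RepHom X Y) : RepHom X Y :=
  ⟨fun i => - f.app i, fun a => by
    rw [LinearMap.comp_neg, LinearMap.neg_comp, f.comm]⟩
def subHom {X Y : Repn Λ V} (f g : RepHom X Y) : RepHom X Y :=
  ⟨fun i => f.app i - g.app i, fun a => by
    rw [LinearMap.comp_sub, LinearMap.sub_comp, f.comm, g.comm]⟩

/-- The modules `W_i ≅ (⊕ W_j) ⊕ G_i`. -/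
lemma exists_free (hwf : WellFounded (fun j i : V => Nonempty (j ⟶ i)))
    (G : V → ModuleCat.{0} Λ) : ∃ W : V → ModuleCat.{0} Λ,
      Nonempty (∀ i, W i ≃ₗ[Λ] (((a : Σ j : V, j ⟶ i) → W a.1) × G i)) := by
  obtain ⟨W, hW⟩ := wf_choice hwf (A := fun _ => ModuleCat.{0} Λ)
    (fun i prev x => Nonempty (x ≃ₗ[Λ] (((a : Σ j : V, j ⟶ i) → prev a.1 ⟨a.2⟩) × G i)))
    (fun i prev => by
      obtain ⟨D, ⟨e⟩⟩ := exists_small_pi (Λ := Λ)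
        (fun a : Σ j : V, j ⟶ i => (prev a.1 ⟨a.2⟩ : Type))
      exact ⟨ModuleCat.of Λ (D × G i), ⟨e.prodCongr (LinearEquiv.refl _ _)⟩⟩)
  exact ⟨W, ⟨fun i => (hW i).some⟩⟩

lemma free_finite (hwf : WellFounded (fun j i : V => Nonempty (j ⟶ i)))
    (G W : V → ModuleCat.{0} Λ)
    (e : ∀ i, W i ≃ₗ[Λ] (((a : Σ j : V, j ⟶ i) → W a.1) × G i))
    (hG : ∀ i, Module.Finite Λ (G i)) (i : V) : Module.Finite Λ (W i) := by
  induction i using hwf.induction with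
  | _ i ih =>
    have := hG i
    have : ∀ a : Σ j : V, j ⟶ i, Module.Finite Λ (W a.1) := fun a => ih a.1 ⟨a.2⟩
    exact Module.Finite.equiv (e i).symm

lemma free_injective (hwf : WellFounded (fun j i : V => Nonempty (j ⟶ i)))
    (G W : V → ModuleCat.{0} Λ)
    (e : ∀ i, W i ≃ₗ[Λ] (((a : Σ j : V, j ⟶ i) → W a.1) × G i))
    (hG : ∀ i, Module.Injective Λ (G i)) (i : V) : Module.Injective Λ (W i) := by
  induction i using hwf.induction with
  | _ i ih =>
    have : ∀ a : Σ j : V, j ⟶ i, Module.Injective Λ (W a.1) := fun a => ih a.1 ⟨a.2⟩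
    exact injective_of_retract (injective_prod (Module.Injective.pi Λ _) (hG i))
      (e i).toLinearMap (e i).symm.toLinearMap (by ext x; simp)

end RepTheory
end QuivRep


namespace QuivRep

section Main
variable {Λ : Type} [Ring Λ] {V : Type} [Quiver.{1} V]
variable [Fintype V] [∀ i j : V, Fintype (i ⟶ j)]

/-- Embedding of an object of `mono(Q,Λ)` in an injective object. -/
lemma exists_embedding (R : Type) [CommRing R] [IsArtinianRing R] [Algebra R Λ]
    [Module.Finite R Λ] (hwf : WellFounded (fun j i : V => Nonempty (j ⟶ i)))
    (X : Repn Λ V) (hX : X.InMono) :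
    ∃ (W : Repn Λ V) (u : RepHom X W), W.InMono ∧ (∀ i, Module.Injective Λ (W.M i)) ∧
      (∀ i, Function.Injective (u.app i)) ∧
      (∀ i w x, W.inMap i w = u.app i x → ∃ y, x = X.inMap i y) ∧
      ((∀ I : Submodule Λ Λ, Module.Projective Λ I) → ∀ (Y : Repn Λ V) (f : RepHom X Y),
        (∀ i, FactorsThroughInj Λ (f.app i)) →
        ∃ k : RepHom W Y, ∀ i x, k.app i (u.app i x) = f.app i x) := by
  have hG : ∀ i, ∃ (G : ModuleCat.{0} Λ) (c : (X.M i ⧸ LinearMap.range (X.inMap i)) →ₗ[Λ] G),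
      Module.Injective Λ G ∧ Function.Injective c ∧ Module.Finite Λ G := fun i => by
    have := hX.1 i
    exact exists_fg_injective (Λ := Λ) R _ (Module.Finite.quotient Λ _)
  choose G c hGi hc hGf using hG
  obtain ⟨W, ⟨e⟩⟩ := exists_free hwf G
  have hWi := free_injective hwf G W e hGi
  have hWf := free_finite hwf G W e hGf
  let π : ∀ i, X.M i →ₗ[Λ] G i := fun i => (c i).comp (LinearMap.range (X.inMap i)).mkQ
  have hπ : ∀ i x, π i x = 0 → ∃ y, x = X.inMap i y := by
    intro i x hx
    have h1 : (LinearMap.range (X.inMap i)).mkQ x = 0 := hc i (by rw [map_zero]; exact hx)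
    obtain ⟨y, hy⟩ := (Submodule.Quotient.mk_eq_zero _).1 h1
    exact ⟨y, hy.symm⟩
  have hπ0 : ∀ i y, π i (X.inMap i y) = 0 := by
    intro i y
    have h1 : (LinearMap.range (X.inMap i)).mkQ (X.inMap i y) = 0 :=
      (Submodule.Quotient.mk_eq_zero _).2 ⟨y, rfl⟩
    change c i _ = 0
    rw [h1, map_zero]
  let m : ∀ i, ((a : Σ j : V, j ⟶ i) → W a.1) →ₗ[Λ] W i := fun i =>
    (e i).symm.toLinearMap.comp (LinearMap.inl Λ _ _)
  have hm : ∀ i w, m i w = (e i).symm (w, 0) := fun i w => rfl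
  have hDi : ∀ i, Module.Injective Λ ((a : Σ j : V, j ⟶ i) → W a.1) := fun i =>
    Module.Injective.pi Λ (fun a : Σ j : V, j ⟶ i => (W a.1 : Type))
  let WR : Repn Λ V := mkRep (fun i => (W i : Type)) m
  have hWR : ∀ i w, WR.inMap i w = (e i).symm (w, 0) := fun i w =>
    LinearMap.congr_fun (inMap_mkRep (fun i => (W i : Type)) m i) w
  obtain ⟨u, hu⟩ := wf_choice hwf (A := fun i => X.M i →ₗ[Λ] W i)
    (fun i prev u => ∃ ext : X.M i →ₗ[Λ] ((a : Σ j : V, j ⟶ i) → W a.1),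
      (∀ y, ext (X.inMap i y) = fun a => prev a.1 ⟨a.2⟩ (y a)) ∧
      ∀ x, u x = (e i).symm (ext x, π i x))
    (by
      intro i prev
      obtain ⟨ext, hext⟩ := injective_extend (hDi i) (X.inMap i) (hX.2 i)
        (LinearMap.pi fun a => (prev a.1 ⟨a.2⟩).comp (LinearMap.proj a))
      exact ⟨(e i).symm.toLinearMap.comp (ext.prod (π i)), ext, hext, fun x => rfl⟩)
  choose ext hext hue using hu
  let U : RepHom X WR := mkHom (Y := WR) u (by
    intro i y
    have h1 : u i (X.inMap i y) = (e i).symm (fun a => u a.1 (y a), 0) := by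
      rw [hue, hπ0, hext]
    exact h1.trans (hWR i _).symm)
  have hWRmono : WR.IsMonoRep := by
    intro i w w' h
    rw [hWR, hWR] at h
    exact congrArg Prod.fst ((e i).symm.injective h)
  have hker : ∀ i w x, WR.inMap i w = U.app i x → ∃ y, x = X.inMap i y := by
    intro i w x h
    rw [hWR] at h
    have h' : (e i).symm (w, 0) = (e i).symm (ext i x, π i x) := h.trans (hue i x)
    have h2 := congrArg Prod.snd ((e i).symm.injective h')
    exact hπ i x h2.symm
  refine ⟨WR, U, ⟨hWf, hWRmono⟩, hWi, ?_, hker, ?_⟩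
  · intro i
    induction i using hwf.induction with
    | _ i ih =>
      rw [injective_iff_map_eq_zero]
      intro x hx
      obtain ⟨y, rfl⟩ := hker i 0 x (by rw [map_zero, hx])
      rw [inMap_comm] at hx
      have h0 := hWRmono i (hx.trans (map_zero (WR.inMap i)).symm)
      have : y = 0 := by
        funext a
        apply ih a.1 ⟨a.2⟩
        rw [congrFun h0 a]
        exact (map_zero _).symm
      rw [this, map_zero]
  · intro hΛ Y f hf
    obtain ⟨k, hk⟩ := wf_choice hwf
      (A := fun i => {k : W i →ₗ[Λ] Y.M i // ∀ x, k (u i x) = f.app i x})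
      (fun i prev k => ∀ w : (a : Σ j : V, j ⟶ i) → W a.1,
        k.1 ((e i).symm (w, 0)) = Y.inMap i (fun a => (prev a.1 ⟨a.2⟩).1 (w a)))
      (by
        intro i prev
        let b : ((a : Σ j : V, j ⟶ i) → W a.1) →ₗ[Λ] Y.M i :=
          (Y.inMap i).comp (LinearMap.pi fun a => (prev a.1 ⟨a.2⟩).1.comp (LinearMap.proj a))
        have hb : ∀ w, b w = Y.inMap i (fun a => (prev a.1 ⟨a.2⟩).1 (w a)) := fun w => rfl
        let t : X.M i →ₗ[Λ] Y.M i := f.app i - b.comp (ext i)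
        have ht0 : ∀ y, t (X.inMap i y) = 0 := by
          intro y
          change f.app i (X.inMap i y) - b (ext i (X.inMap i y)) = 0
          rw [inMap_comm, hb, hext, sub_eq_zero]
          congr 1
          funext a
          exact ((prev a.1 ⟨a.2⟩).2 (y a)).symm
        have htf : FactorsThroughInj Λ t := (hf i).sub (factors_of_injective (hDi i) (ext i) b)
        obtain ⟨J, hJ, p, q, hpq⟩ := htf
        have hr := injective_of_surjective_of_hereditary hΛ hJ q.rangeRestrict
          q.surjective_rangeRestrict
        obtain ⟨d, hd⟩ := exists_factor_epi (LinearMap.range (X.inMap i)).mkQ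
          (Submodule.mkQ_surjective _) (q.rangeRestrict.comp p) (by
            intro x hx
            obtain ⟨y, rfl⟩ := (Submodule.Quotient.mk_eq_zero _).1 hx
            apply Subtype.ext
            have := ht0 y
            rw [← hpq] at this
            exact this)
        obtain ⟨κ, hκ⟩ := injective_extend hr (c i) (hc i) d
        have hκt : ∀ x, (κ (π i x) : Y.M i) = t x := by
          intro x
          change ((κ (c i _) : LinearMap.range q) : Y.M i) = t x
          rw [hκ, hd, ← hpq]
          rfl
        refine ⟨⟨(b.coprod ((LinearMap.range q).subtype.comp κ)).comp (e i).toLinearMap, ?_⟩, ?_⟩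
        · intro x
          rw [hue]
          simp only [LinearMap.comp_apply, LinearEquiv.coe_coe, LinearEquiv.apply_symm_apply,
            LinearMap.coprod_apply, Submodule.subtype_apply]
          rw [hκt]
          change b (ext i x) + (f.app i x - b (ext i x)) = _
          abel
        · intro w
          rw [← hb]
          simp)
    exact ⟨mkHom (X := WR) (fun i => (k i).1) (by
      intro i w
      rw [hWR]
      exact hk i w), fun i x => (k i).2 x⟩

/-- Injective objects of `mono(Q,Λ)` have injective components. -/
lemma injective_of_injInMono (R : Type) [CommRing R] [IsArtinianRing R] [Algebra R Λ]
    [Module.Finite R Λ] (hwf : WellFounded (fun j i : V => Nonempty (j ⟶ i)))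
    (Z : Repn Λ V) (hZ : Z.InMono) (hZi : InjInMono Z) (i : V) :
    Module.Injective Λ (Z.M i) := by
  obtain ⟨W, u, hW, hWi, hu, hker, -⟩ := exists_embedding R hwf Z hZ
  have hC : (coker u).InMono := coker_inMono u hW.1 (by
    intro i w x h a
    obtain ⟨y, rfl⟩ := hker i w x h
    rw [inMap_comm] at h
    exact ⟨y a, congrFun (hW.2 i h) a⟩)
  obtain ⟨r, hr⟩ := hZi W (coker u) hC u (cokerπ u) (coker_ses u hu)
  refine injective_of_retract (hWi i) (u.app i) (r.app i) ?_
  exact congrFun (congrArg RepHom.app hr) i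

lemma phiFull (hwf : WellFounded (fun j i : V => Nonempty (j ⟶ i))) : PhiFull Λ V := by
  intro X Y hX hY φ
  obtain ⟨f, hf⟩ := wf_choice hwf
    (A := fun i => {f : X.M i →ₗ[Λ] Y.M i // StEq Λ f (φ.1 i)})
    (fun i prev f => ∀ y, f.1 (X.inMap i y) = Y.inMap i (fun a => (prev a.1 ⟨a.2⟩).1 (y a)))
    (by
      intro i prev
      obtain ⟨J, u, v, hJ, huv⟩ := FactorsThroughInj.pi
        (fun a : Σ j : V, j ⟶ i => (Y.h a.2).comp (prev a.1 ⟨a.2⟩).1 - (φ.1 i).comp (X.h a.2))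
        (by
          intro a
          have h1 := (prev a.1 ⟨a.2⟩).2.postcomp (Y.h a.2)
          have h2 := φ.2 a.1 i a.2
          have h3 := h1.add h2
          rw [LinearMap.comp_sub, sub_add_sub_cancel] at h3
          exact h3)
      obtain ⟨k, hk⟩ := injective_extend hJ (X.inMap i) (hX.2 i) u
      refine ⟨⟨φ.1 i + v.comp k, J, hJ, k, v, by simp⟩, fun y => ?_⟩
      simp only [LinearMap.add_apply, LinearMap.comp_apply, hk, huv, LinearMap.sub_apply,
        Finset.sum_sub_distrib]
      rw [inMap_apply, inMap_apply, map_sum]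
      abel)
  exact ⟨mkHom (fun i => (f i).1) hf, fun i => (f i).2⟩

lemma phiDense (R : Type) [CommRing R] [IsArtinianRing R] [Algebra R Λ]
    [Module.Finite R Λ] (hwf : WellFounded (fun j i : V => Nonempty (j ⟶ i))) :
    PhiDense Λ V := by
  intro Z hZ
  have hG : ∀ i, ∃ (G : ModuleCat.{0} Λ) (c : Z.M i →ₗ[Λ] G),
      Module.Injective Λ G ∧ Function.Injective c ∧ Module.Finite Λ G := fun i =>
    exists_fg_injective (Λ := Λ) R _ (hZ i)
  choose G c hGi hc hGf using hG
  obtain ⟨W, ⟨e⟩⟩ := exists_free hwf G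
  have hWi := free_injective hwf G W e hGi
  have hWf := free_finite hwf G W e hGf
  have hD : ∀ i, ∃ D : ModuleCat.{0} Λ, Nonempty (D ≃ₗ[Λ] ((a : Σ j : V, j ⟶ i) → W a.1)) :=
    fun i => exists_small_pi (Λ := Λ) (fun a : Σ j : V, j ⟶ i => (W a.1 : Type))
  choose D hD using hD
  let d : ∀ i, D i ≃ₗ[Λ] ((a : Σ j : V, j ⟶ i) → W a.1) := fun i => (hD i).some
  have hDi : ∀ i, Module.Injective Λ (D i) := fun i =>
    injective_of_retract (Module.Injective.pi Λ (fun a : Σ j : V, j ⟶ i => (W a.1 : Type)))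
      (d i).toLinearMap (d i).symm.toLinearMap (by ext x; simp)
  have hDf : ∀ i, Module.Finite Λ (D i) := fun i => Module.Finite.equiv (d i).symm
  let ι : ∀ i, (Z.M i × D i) →ₗ[Λ] W i := fun i =>
    (e i).symm.toLinearMap.comp
      (((d i).toLinearMap.comp (LinearMap.snd Λ _ _)).prod ((c i).comp (LinearMap.fst Λ _ _)))
  have hι : ∀ i, Function.Injective (ι i) := by
    intro i x y h
    have h1 := (e i).symm.injective h
    exact Prod.ext (hc i (congrArg Prod.snd h1)) ((d i).injective (congrArg Prod.fst h1))
  let m : ∀ i, ((a : Σ j : V, j ⟶ i) → Z.M a.1 × D a.1) →ₗ[Λ] (Z.M i × D i) := fun i =>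
    ((Z.inMap i).comp (LinearMap.pi fun a => (LinearMap.fst Λ _ _).comp (LinearMap.proj a))).prod
      ((d i).symm.toLinearMap.comp (LinearMap.pi fun a => (ι a.1).comp (LinearMap.proj a)))
  let X : Repn Λ V := mkRep (fun i => Z.M i × D i) m
  have hXm : ∀ i y, X.inMap i y = m i y := fun i y =>
    LinearMap.congr_fun (inMap_mkRep (fun i => Z.M i × D i) m i) y
  let q : RepHom X Z := mkHom (X := X) (fun i => LinearMap.fst Λ (Z.M i) (D i)) (by
    intro i y
    rw [hXm]
    rfl)
  refine ⟨X, ⟨fun i => ?_, fun i => ?_⟩, ⟨fun i => LinearMap.inl Λ (Z.M i) (D i), ?_⟩,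
    ⟨q.app, ?_⟩, ?_, ?_⟩
  · have := hZ i
    exact Module.Finite.prod
  · intro y y' h
    rw [hXm, hXm] at h
    have h2 := (d i).symm.injective (congrArg Prod.snd h)
    funext a
    exact hι a.1 (congrFun h2 a)
  · intro i j a
    let xa : (Z.M i × D i) →ₗ[Λ] (Z.M j × D j) := X.h a
    have hxa : xa.comp (LinearMap.inl Λ (Z.M i) (D i)) -
          (LinearMap.inl Λ (Z.M j) (D j)).comp (Z.h a)
        = (LinearMap.inr Λ (Z.M j) (D j)).comp ((LinearMap.snd Λ (Z.M j) (D j)).comp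
          (xa.comp (LinearMap.inl Λ (Z.M i) (D i)))) := by
      refine LinearMap.ext fun x => ?_
      have h1 := LinearMap.congr_fun (q.comm a) ((x, 0) : Z.M i × D i)
      have h1' : (xa ((x, 0) : Z.M i × D i)).1 = Z.h a x := h1.symm
      refine Prod.ext ?_ ?_
      · change (xa ((x, 0) : Z.M i × D i)).1 - Z.h a x = 0
        rw [h1', sub_self]
      · change (xa ((x, 0) : Z.M i × D i)).2 - 0 = (xa ((x, 0) : Z.M i × D i)).2
        rw [sub_zero]
    have h : FactorsThroughInj Λ (xa.comp (LinearMap.inl Λ (Z.M i) (D i)) -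
          (LinearMap.inl Λ (Z.M j) (D j)).comp (Z.h a)) := by
      rw [hxa]
      exact factors_of_injective (hDi j) _ _
    exact h
  · intro i j a
    unfold StEq
    rw [q.comm a, sub_self]
    exact ⟨ModuleCat.of Λ PUnit, ⟨fun X Y _ _ _ _ f hf g => ⟨0, fun x => rfl⟩⟩, 0, 0, by simp⟩
  · intro i
    exact ⟨ModuleCat.of Λ PUnit, ⟨fun X Y _ _ _ _ f hf g => ⟨0, fun x => rfl⟩⟩, 0, 0, by
      refine LinearMap.ext fun x => ?_
      change 0 = x - x
      rw [sub_self]⟩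
  · intro i
    refine ⟨D i, hDi i, LinearMap.snd Λ (Z.M i) (D i), -LinearMap.inr Λ (Z.M i) (D i), ?_⟩
    refine LinearMap.ext fun x => ?_
    refine Prod.ext ?_ ?_
    · change -(0 : Z.M i) = x.1 - x.1
      simp
    · change -x.2 = 0 - x.2
      simp

lemma phiReflectsIsos (R : Type) [CommRing R] [IsArtinianRing R] [Algebra R Λ]
    [Module.Finite R Λ] (hwf : WellFounded (fun j i : V => Nonempty (j ⟶ i))) :
    PhiReflectsIsos Λ V := by
  rintro X Y hX hY f ⟨ψ, hψ1, hψ2⟩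
  obtain ⟨W, u, hW, hWi, hu, hker, -⟩ := exists_embedding R hwf X hX
  let Y' := prodRep Y W
  let f' : RepHom X Y' := prodRep.lift f u
  have hf' : ∀ i, Function.Injective (f'.app i) := fun i x y h => hu i (congrArg Prod.snd h)
  have hC : (coker f').InMono := by
    refine coker_inMono f' ?_ ?_
    · intro i
      have := hY.1 i
      have := hW.1 i
      exact Module.Finite.prod
    · intro i y x h a
      have h1 : Y.inMap i (fun a => (y a).1) = f.app i x := by
        have := inMap_comm (prodRep.fst Y W) i y
        rw [h] at this
        exact this.symm
      have h2 : W.inMap i (fun a => (y a).2) = u.app i x := by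
        have := inMap_comm (prodRep.snd Y W) i y
        rw [h] at this
        exact this.symm
      obtain ⟨z, rfl⟩ := hker i _ x h2
      rw [inMap_comm] at h1 h2
      exact ⟨z a, Prod.ext (congrFun (hY.2 i h1) a) (congrFun (hW.2 i h2) a)⟩
  let C := coker f'
  let π : RepHom Y' C := cokerπ f'
  have hses : IsSES f' π := coker_ses f' hf'
  -- pointwise retractions
  have hρ : ∀ i, ∃ ρ : Y'.M i →ₗ[Λ] X.M i, (∀ x, ρ (f'.app i x) = x) ∧
      FactorsThroughInj Λ (LinearMap.id - (f'.app i).comp ρ) := by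
    intro i
    obtain ⟨J, hJ, a, b, hab⟩ := hψ1 i
    obtain ⟨a', ha'⟩ := injective_extend hJ (f'.app i) (hf' i) a
    refine ⟨(ψ.1 i).comp ((prodRep.fst Y W).app i) - b.comp a', ?_, ?_⟩
    · intro x
      have h1 : b (a x) = ψ.1 i (f.app i x) - x := LinearMap.congr_fun hab x
      change ψ.1 i (f.app i x) - b (a' (f'.app i x)) = x
      rw [ha', h1]
      abel
    · have h1 : FactorsThroughInj Λ (((prodRep.inl Y W).app i).comp
          ((-((f.app i).comp (ψ.1 i) - LinearMap.id)).comp ((prodRep.fst Y W).app i))) :=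
        ((hψ2 i).neg.precomp _).postcomp _
      have h2 : FactorsThroughInj Λ (((prodRep.inr Y W).app i).comp
          ((prodRep.snd Y W).app i -
            ((u.app i).comp (ψ.1 i)).comp ((prodRep.fst Y W).app i))) :=
        factors_of_injective (hWi i) _ _
      have h3 : FactorsThroughInj Λ (((f'.app i).comp b).comp a') := ⟨J, hJ, a', _, rfl⟩
      have h4 := (h1.add h2).add h3
      have heq : LinearMap.id - (f'.app i).comp
          ((ψ.1 i).comp ((prodRep.fst Y W).app i) - b.comp a') =
          ((prodRep.inl Y W).app i).comp
            ((-((f.app i).comp (ψ.1 i) - LinearMap.id)).comp ((prodRep.fst Y W).app i)) +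
          ((prodRep.inr Y W).app i).comp ((prodRep.snd Y W).app i -
            ((u.app i).comp (ψ.1 i)).comp ((prodRep.fst Y W).app i)) +
          ((f'.app i).comp b).comp a' := by
        refine LinearMap.ext fun y => ?_
        refine Prod.ext ?_ ?_
        · change y.1 - f.app i (ψ.1 i y.1 - b (a' y)) =
            -(f.app i (ψ.1 i y.1) - y.1) + 0 + f.app i (b (a' y))
          rw [map_sub]; abel
        · change y.2 - u.app i (ψ.1 i y.1 - b (a' y)) =
            0 + (y.2 - u.app i (ψ.1 i y.1)) + u.app i (b (a' y))
          rw [map_sub]; abel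
      rw [heq]
      exact h4
  have hCi : ∀ i, Module.Injective Λ (C.M i) := by
    intro i
    obtain ⟨ρ, hρ1, hρ2⟩ := hρ i
    obtain ⟨J, hJ, p, q, hpq⟩ := hρ2
    have hp : ∀ y, q (p y) = y - f'.app i (ρ y) := fun y => LinearMap.congr_fun hpq y
    obtain ⟨σ, hσ⟩ := exists_factor_epi (π.app i) (hses.2.1 i)
      (p.comp (LinearMap.id - (f'.app i).comp ρ)) (by
        intro y hy
        have : y ∈ LinearMap.range (f'.app i) := by rw [hses.2.2 i]; exact hy
        obtain ⟨x, rfl⟩ := this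
        change p (f'.app i x - f'.app i (ρ (f'.app i x))) = 0
        rw [hρ1, sub_self, map_zero])
    have hπf : ∀ x, π.app i (f'.app i x) = 0 := by
      intro x
      have : f'.app i x ∈ LinearMap.ker (π.app i) := by rw [← hses.2.2 i]; exact ⟨x, rfl⟩
      exact this
    refine injective_of_retract hJ σ ((π.app i).comp q) ?_
    refine LinearMap.ext fun c => ?_
    obtain ⟨y, rfl⟩ := hses.2.1 i c
    change π.app i (q (σ _)) = π.app i y
    rw [hσ]
    change π.app i (q (p (y - f'.app i (ρ y)))) = π.app i y
    rw [hp, map_sub, map_sub, hπf, hπf, sub_zero, sub_zero]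
  obtain ⟨s, hs⟩ := exists_section hwf f' π hses
    (fun i => by
      obtain ⟨ρ, hρ1, -⟩ := hρ i
      exact ⟨ρ, hρ1⟩)
    (by
      intro i w
      have : ∀ a : Σ j : V, j ⟶ i, Module.Injective Λ (C.M a.1) := fun a => hCi a.1
      obtain ⟨r, hr⟩ := injective_extend
        (Module.Injective.pi Λ (fun a : Σ j : V, j ⟶ i => C.M a.1)) (C.inMap i) (hC.2 i)
        LinearMap.id
      exact ⟨w.comp r, fun y => congrArg w (hr y)⟩)
  obtain ⟨p, hp1, hp2⟩ := exists_retraction f' π hses s hs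
  refine ⟨p.comp (prodRep.inl Y W), ⟨W, hW, injInMono_of_injective hwf W hWi, u,
    negHom (p.comp (prodRep.inr Y W)), ?_⟩, ⟨C, hC, injInMono_of_injective hwf C hCi,
    π.comp (prodRep.inl Y W), negHom ((prodRep.fst Y W).comp s), ?_⟩⟩
  · intro i
    refine LinearMap.ext fun x => ?_
    change -(p.app i ((0, u.app i x) : Y.M i × W.M i)) =
      p.app i ((f.app i x, 0) : Y.M i × W.M i) - x
    have h1 : p.app i ((f.app i x, u.app i x) : Y.M i × W.M i) = x := hp1 i x
    have h2 : ((f.app i x, u.app i x) : Y.M i × W.M i) =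
      ((f.app i x, 0) : Y.M i × W.M i) + ((0, u.app i x) : Y.M i × W.M i) := by simp
    have h3 : p.app i ((f.app i x, u.app i x) : Y.M i × W.M i) =
      p.app i ((f.app i x, 0) : Y.M i × W.M i) + p.app i ((0, u.app i x) : Y.M i × W.M i) := by
      rw [h2]; exact map_add (p.app i) _ _
    rw [h1] at h3
    have h5 : p.app i ((f.app i x, 0) : Y.M i × W.M i) =
        x - p.app i ((0, u.app i x) : Y.M i × W.M i) := by
      rw [eq_sub_iff_add_eq]; exact h3.symm
    rw [h5]; abel
  · intro i
    refine LinearMap.ext fun y => ?_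
    have h1 := congrArg Prod.fst (hp2 i ((y, 0) : Y.M i × W.M i))
    have h2 : f.app i (p.app i ((y, 0) : Y.M i × W.M i)) =
      y - (s.app i (π.app i ((y, 0) : Y.M i × W.M i))).1 := h1
    change -((s.app i (π.app i ((y, 0) : Y.M i × W.M i))).1) =
      f.app i (p.app i ((y, 0) : Y.M i × W.M i)) - y
    rw [h2]
    abel

lemma phiFaithful_of_hereditary (R : Type) [CommRing R] [IsArtinianRing R] [Algebra R Λ]
    [Module.Finite R Λ] (hwf : WellFounded (fun j i : V => Nonempty (j ⟶ i)))
    (hΛ : ∀ I : Submodule Λ Λ, Module.Projective Λ I) : PhiFaithful Λ V := by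
  intro X Y hX hY f g h
  obtain ⟨W, u, hW, hWi, hu, hker, hfac⟩ := exists_embedding R hwf X hX
  obtain ⟨k, hk⟩ := hfac hΛ Y (subHom f g) h
  exact ⟨W, hW, injInMono_of_injective hwf W hWi, u, k, fun i => LinearMap.ext fun x => hk i x⟩

end Main
end QuivRep


namespace QuivRep

section Converse
variable {Λ : Type} [Ring Λ] {V : Type} [Quiver.{1} V]
variable [Fintype V] [∀ i j : V, Fintype (i ⟶ j)]

/-- If `Φ` is faithful then quotients of finitely generated injectives are injective. -/
lemma quotient_injective_of_faithful (R : Type) [CommRing R] [IsArtinianRing R] [Algebra R Λ]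
    [Module.Finite R Λ] (hwf : WellFounded (fun j i : V => Nonempty (j ⟶ i)))
    (hF : PhiFaithful Λ V) (i j : V) (a : i ⟶ j) (hsink : ∀ k, IsEmpty (j ⟶ k))
    (E : ModuleCat.{0} Λ) (hE : Module.Injective Λ E) (hEf : Module.Finite Λ E)
    (K : Submodule Λ E) : Module.Injective Λ (E ⧸ K) := by
  classical
  have : IsArtinianRing Λ := IsArtinianRing.of_finite R Λ
  have hKf : Module.Finite Λ K := inferInstance
  let G : V → ModuleCat.{0} Λ := fun _ => ModuleCat.of Λ (K × E)
  have hGf : ∀ k, Module.Finite Λ (G k) := fun k => Module.Finite.prod (M := K) (N := E)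
  obtain ⟨W, ⟨e⟩⟩ := exists_free hwf G
  have hWf := free_finite hwf G W e hGf
  have hT : ∀ l, ∃ T : ((b : Σ k : V, k ⟶ l) → W b.1) →ₗ[Λ]
      ((b : Σ k : V, k ⟶ l) → W b.1) × (K × E), Function.Injective T ∧
      (l = j → (∀ x : K, ∃ d, T d = (0, (0, (x : E)))) ∧ ∀ d, (T d).2.2 ∈ K) := by
    intro l
    by_cases hl : l = j
    · subst hl
      let a' : Σ k : V, k ⟶ l := ⟨i, a⟩
      let pr : ((b : Σ k : V, k ⟶ l) → W b.1) →ₗ[Λ] K :=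
        (LinearMap.fst Λ K E).comp ((LinearMap.snd Λ _ (K × E)).comp
          ((e i).toLinearMap.comp (LinearMap.proj a')))
      let ι : K →ₗ[Λ] ((b : Σ k : V, k ⟶ l) → W b.1) :=
        (LinearMap.single Λ (fun b : Σ k : V, k ⟶ l => (W b.1 : Type)) a').comp
          ((e i).symm.toLinearMap.comp ((LinearMap.inr Λ _ (K × E)).comp (LinearMap.inl Λ K E)))
      have hpr : ∀ x, pr (ι x) = x := by
        intro x
        have h1 : ι x a' = (e i).symm (0, (x, 0)) := Pi.single_eq_same _ _
        change ((e i) (ι x a')).2.1 = x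
        rw [h1, LinearEquiv.apply_symm_apply]
      let T : ((b : Σ k : V, k ⟶ l) → W b.1) →ₗ[Λ]
          ((b : Σ k : V, k ⟶ l) → W b.1) × (K × E) :=
        (LinearMap.id - ι.comp pr).prod ((0 : _ →ₗ[Λ] K).prod (K.subtype.comp pr))
      have hTd : ∀ d, T d = (d - ι (pr d), (0, (pr d : E))) := fun d => rfl
      refine ⟨T, ?_, fun _ => ⟨fun x => ⟨ι x, ?_⟩, fun d => (pr d).2⟩⟩
      · rw [injective_iff_map_eq_zero]
        intro d hd
        rw [hTd] at hd
        have h1 := congrArg Prod.fst hd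
        have h2 : ((pr d : K) : E) = 0 := congrArg (fun z => z.2.2) hd
        have h3 : pr d = 0 := Subtype.ext h2
        have h4 : d - ι (pr d) = 0 := h1
        rw [h3, map_zero, sub_zero] at h4
        exact h4
      · rw [hTd, hpr, sub_self]
    · exact ⟨LinearMap.inl Λ _ _, LinearMap.inl_injective, fun h => absurd h hl⟩
  choose T hTinj hTj using hT
  let m : ∀ l, ((b : Σ k : V, k ⟶ l) → W b.1) →ₗ[Λ] W l := fun l =>
    (e l).symm.toLinearMap.comp (T l)
  let X : Repn Λ V := mkRep (fun l => (W l : Type)) m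
  have hXm : ∀ l y, X.inMap l y = (e l).symm (T l y) := fun l y =>
    LinearMap.congr_fun (inMap_mkRep (fun l => (W l : Type)) m l) y
  have hX : X.InMono := by
    refine ⟨hWf, fun l y y' h => ?_⟩
    rw [hXm, hXm] at h
    exact hTinj l ((e l).symm.injective h)
  let N : V → Submodule Λ E := fun k => if k = j then K else ⊤
  have hNj : N j = K := if_pos rfl
  have hN : ∀ k, k ≠ j → N k = ⊤ := fun k hk => if_neg hk
  let Y : Repn Λ V := { M := fun k => E ⧸ N k, h := fun _ => 0 }
  have hY0 : ∀ k y, Y.inMap k y = 0 := by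
    intro k y
    rw [inMap_apply]
    exact Finset.sum_eq_zero fun b _ => rfl
  have hY : Y.InMono := by
    refine ⟨fun k => Module.Finite.quotient Λ (N k), fun k y y' _ => ?_⟩
    funext b
    have hb : b.1 ≠ j := by
      intro hb
      have := b.2
      rw [hb] at this
      exact (hsink k).false this
    have : Subsingleton (E ⧸ N b.1) := by
      exact Submodule.Quotient.subsingleton_iff.2 (hN _ hb)
    exact this.elim (y b) (y' b)
  let pE : ∀ k, W k →ₗ[Λ] E := fun k =>
    (LinearMap.snd Λ K E).comp ((LinearMap.snd Λ _ (K × E)).comp (e k).toLinearMap)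
  have hpE : ∀ k w, pE k w = ((e k) w).2.2 := fun k w => rfl
  let f : RepHom X Y := mkHom (X := X) (Y := Y) (fun k => (N k).mkQ.comp (pE k)) (by
    intro k y
    rw [hY0, hXm]
    change (N k).mkQ (pE k _) = 0
    rw [hpE, LinearEquiv.apply_symm_apply]
    refine (Submodule.Quotient.mk_eq_zero _).2 ?_
    by_cases hk : k = j
    · subst hk
      rw [hNj]
      exact (hTj k rfl).2 y
    · rw [hN k hk]
      trivial)
  have hfst : StFamEq (fun k => f.app k) (fun k => (0 : RepHom X Y).app k) := by
    intro k
    have h1 : FactorsThroughInj Λ (f.app k) := factors_of_injective hE (pE k) (N k).mkQ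
    have h2 : f.app k - (0 : RepHom X Y).app k = f.app k := sub_zero _
    unfold StEq
    rw [h2]
    exact h1
  obtain ⟨Z, hZ, hZi, u, v, huv⟩ := hF X Y hX hY f 0 hfst
  have huv' : ∀ x, v.app j (u.app j x) = f.app j x := fun x =>
    (LinearMap.congr_fun (huv j) x).trans (by
      change f.app j x - 0 = f.app j x
      exact sub_zero _)
  have hZinj := injective_of_injInMono R hwf Z hZ hZi
  have hZpi : Module.Injective Λ ((b : Σ k : V, k ⟶ j) → Z.M b.1) :=
    Module.Injective.pi Λ (fun b : Σ k : V, k ⟶ j => Z.M b.1)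
  obtain ⟨ρ, hρ⟩ := injective_extend hZpi (Z.inMap j) (hZ.2 j) LinearMap.id
  let C := Z.M j ⧸ LinearMap.range (Z.inMap j)
  let q : Z.M j →ₗ[Λ] C := (LinearMap.range (Z.inMap j)).mkQ
  have hC : Module.Injective Λ C := by
    let s : C →ₗ[Λ] Z.M j := (LinearMap.range (Z.inMap j)).liftQ
      (LinearMap.id - (Z.inMap j).comp ρ) (by
        rintro _ ⟨y, rfl⟩
        change Z.inMap j y - Z.inMap j (ρ (Z.inMap j y)) = 0
        rw [hρ]
        exact sub_self _)
    refine injective_of_retract (hZinj j) s q ?_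
    refine LinearMap.ext fun c => ?_
    obtain ⟨z, rfl⟩ := Submodule.mkQ_surjective _ c
    change q (z - Z.inMap j (ρ z)) = q z
    rw [map_sub]
    have : q (Z.inMap j (ρ z)) = 0 := (Submodule.Quotient.mk_eq_zero _).2 ⟨_, rfl⟩
    rw [this, sub_zero]
  let σ : E →ₗ[Λ] X.M j := (e j).symm.toLinearMap.comp
    ((LinearMap.inr Λ _ (K × E)).comp (LinearMap.inr Λ K E))
  have hσ : ∀ x, σ x = (e j).symm (0, (0, x)) := fun x => rfl
  let α : (E ⧸ K) →ₗ[Λ] C := K.liftQ (q.comp ((u.app j).comp σ)) (by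
    intro x hx
    obtain ⟨d, hd⟩ := (hTj j rfl).1 ⟨x, hx⟩
    obtain ⟨d', hd'⟩ : ∃ d' : (b : Σ k : V, k ⟶ j) → X.M b.1, X.inMap j d' = σ x :=
      ⟨d, (hXm j d).trans (congrArg (e j).symm hd)⟩
    change q (u.app j (σ x)) = 0
    rw [← hd', inMap_comm]
    exact (Submodule.Quotient.mk_eq_zero _).2 ⟨_, rfl⟩)
  let β : C →ₗ[Λ] (E ⧸ N j) := (LinearMap.range (Z.inMap j)).liftQ (v.app j) (by
    rintro _ ⟨y, rfl⟩
    change v.app j (Z.inMap j y) = 0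
    rw [inMap_comm, hY0])
  let γ : (E ⧸ N j) →ₗ[Λ] (E ⧸ K) := Submodule.mapQ _ _ LinearMap.id (by
    rw [hNj]; exact le_rfl)
  refine injective_of_retract hC α (γ.comp β) ?_
  refine LinearMap.ext fun c => ?_
  obtain ⟨x, rfl⟩ := Submodule.mkQ_surjective _ c
  change γ (v.app j (u.app j (σ x))) = K.mkQ x
  rw [huv']
  have h1 : f.app j (σ x) = (N j).mkQ x := by
    change (N j).mkQ (((e j) (σ x)).2.2) = _
    rw [hσ, LinearEquiv.apply_symm_apply]
  rw [h1]
  rfl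

lemma hereditary_of_faithful (R : Type) [CommRing R] [IsArtinianRing R] [Algebra R Λ]
    [Module.Finite R Λ] (hacyc : IsAcyclic V) (hF : PhiFaithful Λ V)
    (harr : ∃ i j : V, Nonempty (i ⟶ j)) (I : Submodule Λ Λ) : Module.Projective Λ I := by
  obtain ⟨i₀, j₀, h₀⟩ := harr
  obtain ⟨j, ⟨i, ⟨a⟩⟩, hmin⟩ := (wf_arrow_op hacyc).has_min
    {j : V | ∃ i : V, Nonempty (i ⟶ j)} ⟨j₀, i₀, h₀⟩
  have hsink : ∀ k, IsEmpty (j ⟶ k) := fun k => ⟨fun b => hmin k ⟨j, ⟨b⟩⟩ ⟨b⟩⟩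
  exact projective_of_quotients_injective R (fun E hE hEf K =>
    quotient_injective_of_faithful R (wf_arrow hacyc) hF i j a hsink E hE hEf K) I

end Converse
end QuivRep


open QuivRep in
/-- Let `Q` be a finite acyclic quiver and `Λ` an Artin algebra.  The
composite `mono(Q,Λ) → rep(Q, mod Λ) → rep(Q, stable-mod Λ)` induces a functor `Φ` from the
injectively stable category of `mono(Q,Λ)` to `rep(Q, stable-mod Λ)` which is an epivalence:
it is full, dense and reflects isomorphisms.  Moreover, if `Q` has at least one arrow, then
`Φ` is an equivalence (equivalently, in addition faithful) if and only if `Λ` has global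
dimension at most `1` (every left ideal of `Λ` is projective). -/
theorem epivalence_to_stable_representations
    (V : Type) [Quiver.{1} V] [Fintype V] [∀ i j : V, Fintype (i ⟶ j)]
    (hacyc : IsAcyclic V)
    (R : Type) [CommRing R] [IsArtinianRing R]
    (Λ : Type) [Ring Λ] [Algebra R Λ] [Module.Finite R Λ] :
    PhiFull Λ V ∧ PhiDense Λ V ∧ PhiReflectsIsos Λ V ∧
    ((∃ i j : V, Nonempty (i ⟶ j)) →
      ((PhiFull Λ V ∧ PhiDense Λ V ∧ PhiFaithful Λ V) ↔
        ∀ I : Submodule Λ Λ, Module.Projective Λ I)) := by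
  have hwf := wf_arrow hacyc
  refine ⟨phiFull hwf, phiDense R hwf, phiReflectsIsos R hwf, fun harr => ⟨fun h => ?_, fun h => ?_⟩⟩
  · exact hereditary_of_faithful R hacyc h.2.2 harr
  · exact ⟨phiFull hwf, phiDense R hwf, phiFaithful_of_hereditary R hwf h⟩
end

section
/- As an exact category, V_p^n has enough injectives, and the following are equivalent for an object B of V_p^n: (1) B is injective with respect to the exact structure of V_p^n; (2) v(x) = h(x) for all x ∈ B, where h is the p-height; (3) B(i) = pⁱ·B for each 0 ≤ i ≤ n. -/
namespace PVal

/-- A `p`-valuated abelian group whose nonzero elements have value at most `n-1`: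
an object of the category `𝒱ₚⁿ`. -/
structure ValGroup (p n : ℕ) where
  B : Type
  [acg : AddCommGroup B]
  v : B → ℕ∞
  add_le : ∀ x y : B, min (v x) (v y) ≤ v (x + y)
  smul_lt : ∀ x : B, v x < v (p • x) ∨ (v x = ⊤ ∧ v (p • x) = ⊤)
  bounded : ∀ x : B, x ≠ 0 → v x ≤ ((n - 1 : ℕ) : ℕ∞)

attribute [instance] ValGroup.acg

/-- A morphism of `p`-valuated abelian groups. -/
@[ext]
structure ValHom {p n : ℕ} (A B : ValGroup p n) where
  f : A.B →+ B.B
  le : ∀ x, A.v x ≤ B.v (f x)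

theorem ValGroup.v_zero {p n : ℕ} (A : ValGroup p n) : A.v 0 = ⊤ := by
  rcases A.smul_lt 0 with h | h
  · rw [smul_zero] at h
    exact absurd h (lt_irrefl _)
  · exact h.1

namespace ValHom

variable {p n : ℕ} {A B C D : ValGroup p n}

def id (A : ValGroup p n) : ValHom A A :=
  ⟨AddMonoidHom.id A.B, fun _ => le_rfl⟩

def comp (g : ValHom B C) (f : ValHom A B) : ValHom A C :=
  ⟨g.f.comp f.f, fun x => (f.le x).trans (g.le (f.f x))⟩

instance : Zero (ValHom A B) :=
  ⟨⟨0, fun x => by simp [ValGroup.v_zero]⟩⟩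

end ValHom

variable {p n : ℕ}

/-- `ι` is a kernel of `ψ`. -/
def IsKernelOf {K A B : ValGroup p n} (ι : ValHom K A) (ψ : ValHom A B) : Prop :=
  ψ.comp ι = 0 ∧
    ∀ (C : ValGroup p n) (ρ : ValHom C A), ψ.comp ρ = 0 →
      ∃! σ : ValHom C K, ι.comp σ = ρ

/-- `π` is a cokernel of `ψ`. -/
def IsCokernelOf {A B Q : ValGroup p n} (π : ValHom B Q) (ψ : ValHom A B) : Prop :=
  π.comp ψ = 0 ∧
    ∀ (C : ValGroup p n) (ρ : ValHom B C), ρ.comp ψ = 0 →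
      ∃! σ : ValHom Q C, σ.comp π = ρ

/-- A morphism which occurs as a kernel. -/
def IsKernelMor {A B : ValGroup p n} (φ : ValHom A B) : Prop :=
  ∃ (C : ValGroup p n) (ψ : ValHom B C), IsKernelOf φ ψ

/-- A morphism which occurs as a cokernel. -/
def IsCokernelMor {A B : ValGroup p n} (φ : ValHom A B) : Prop :=
  ∃ (C : ValGroup p n) (ψ : ValHom C A), IsCokernelOf φ ψ

/-- A kernel–cokernel pair (conflation). -/
def IsConflation {A B C : ValGroup p n} (φ : ValHom A B) (ψ : ValHom B C) : Prop :=
  IsKernelOf φ ψ ∧ IsCokernelOf ψ φ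

end PVal

namespace PVal

/-- Injectivity with respect to the exact structure of `𝒱ₚⁿ` (whose inflations are the
kernels): morphisms into `J` extend along inflations. -/
def IsInjObj {p n : ℕ} (J : ValGroup p n) : Prop :=
  ∀ (A B : ValGroup p n) (ι : ValHom A B), IsKernelMor ι →
    ∀ g : ValHom A J, ∃ h : ValHom B J, h.comp ι = g

/-- The `p`-height of an element of an abelian group: the largest `m` such that `x` is
divisible by `p^m`, and `∞` if there is no largest such `m`. -/
noncomputable def pHeight (p : ℕ) {G : Type} [AddCommGroup G] (x : G) : ℕ∞ :=
  ⨆ (m : ℕ) (_ : ∃ y : G, p ^ m • y = x), (m : ℕ∞)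

end PVal

namespace PVal

theorem ValGroup.eq_zero_of_top {p n : ℕ} (A : ValGroup p n) {x : A.B} (h : A.v x = ⊤) :
    x = 0 := by
  by_contra hx
  have := A.bounded x hx
  rw [h] at this
  exact absurd this (by simp)

theorem ValGroup.nsmul_le {p n : ℕ} (A : ValGroup p n) (x : A.B) (k : ℕ) :
    A.v x ≤ A.v (k • x) := by
  induction k with
  | zero => simp [A.v_zero]
  | succ k ih =>
    rw [succ_nsmul]
    exact (le_min ih le_rfl).trans (A.add_le _ _)

theorem ValGroup.succ_le {p n : ℕ} (A : ValGroup p n) (x : A.B) :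
    A.v x + 1 ≤ A.v (p • x) := by
  rcases A.smul_lt x with h | h
  · exact Order.add_one_le_of_lt h
  · simp [h.2]

theorem ValGroup.pow_le {p n : ℕ} (A : ValGroup p n) (x : A.B) (i : ℕ) :
    (i : ℕ∞) ≤ A.v (p ^ i • x) := by
  induction i with
  | zero => simp
  | succ k ih =>
    rw [pow_succ', mul_smul]
    push_cast
    exact (add_le_add_left ih 1).trans (A.succ_le _)

theorem ValGroup.eq_zero_of_le {p n : ℕ} (hn : 1 ≤ n) (A : ValGroup p n) {x : A.B}
    (h : (n : ℕ∞) ≤ A.v x) : x = 0 := by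
  by_contra hx
  have h2 := h.trans (A.bounded x hx)
  have h3 : n ≤ n - 1 := by exact_mod_cast h2
  omega

theorem ValGroup.pow_smul {p n : ℕ} (hn : 1 ≤ n) (A : ValGroup p n) (x : A.B) :
    p ^ n • x = 0 := A.eq_zero_of_le hn (A.pow_le x n)

theorem ValGroup.neg_le {p n : ℕ} (hp : p.Prime) (hn : 1 ≤ n) (A : ValGroup p n) (x : A.B) :
    A.v x ≤ A.v (-x) := by
  have h : -x = (p ^ n - 1) • x := by
    have h1 : (p ^ n - 1) • x + x = 0 := by
      rw [← succ_nsmul, Nat.sub_add_cancel (Nat.pos_of_ne_zero (pow_ne_zero _ hp.ne_zero))]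
      exact A.pow_smul hn x
    exact (eq_neg_of_add_eq_zero_left h1).symm
  rw [h]
  exact A.nsmul_le x _

theorem ValGroup.zsmul_le {p n : ℕ} (hp : p.Prime) (hn : 1 ≤ n) (A : ValGroup p n) (x : A.B)
    (k : ℤ) : A.v x ≤ A.v (k • x) := by
  obtain ⟨m, rfl | rfl⟩ := k.eq_nat_or_neg
  · rw [natCast_zsmul]; exact A.nsmul_le x m
  · rw [neg_smul, natCast_zsmul]; exact (A.nsmul_le x m).trans (A.neg_le hp hn _)

/-- inverse of `k` prime to `p` acting on `A` -/
theorem ValGroup.exists_inv {p n : ℕ} (hp : p.Prime) (hn : 1 ≤ n) (A : ValGroup p n)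
    {k : ℤ} (hk : ¬ (p : ℤ) ∣ k) : ∃ l : ℤ, ∀ x : A.B, l • k • x = x := by
  have hc : IsCoprime ((p : ℤ) ^ n) k :=
    ((Nat.prime_iff_prime_int.mp hp).coprime_iff_not_dvd.mpr hk).pow_left
  obtain ⟨a, l, h⟩ := hc
  refine ⟨l, fun x => ?_⟩
  have h0 : ((p : ℤ) ^ n) • x = 0 := by
    have := A.pow_smul hn x
    rw [← natCast_zsmul] at this
    exact_mod_cast this
  calc l • k • x = (a * (p : ℤ) ^ n + l * k) • x := by
        rw [add_smul, mul_smul a, h0, smul_zero, zero_add, mul_smul]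
    _ = x := by rw [h, one_smul]

theorem ValGroup.exists_max {p n : ℕ} (A : ValGroup p n) (S : Set A.B) (hS : S.Nonempty) :
    ∃ b ∈ S, ∀ c ∈ S, A.v c ≤ A.v b := by
  by_cases h0 : (0 : A.B) ∈ S
  · exact ⟨0, h0, fun c _ => by simp [A.v_zero]⟩
  have hfin : (A.v '' S).Finite := by
    apply ((Set.finite_Iic (n - 1)).image (fun m : ℕ => (m : ℕ∞))).subset
    rintro _ ⟨c, hc, rfl⟩
    have hb := A.bounded c (by rintro rfl; exact h0 hc)
    obtain ⟨m, hm⟩ := ENat.ne_top_iff_exists.mp (ne_top_of_le_ne_top (ENat.natCast_ne_top _) hb)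
    refine ⟨m, ?_, hm⟩
    rw [← hm] at hb
    exact_mod_cast hb
  obtain ⟨_, ⟨b, hb, rfl⟩, hmax⟩ := Set.exists_max_image (A.v '' S) id hfin (hS.image _)
  exact ⟨b, hb, fun c hc => hmax _ ⟨c, hc, rfl⟩⟩

/-- Condition (3). -/
def Cond3 {p n : ℕ} (J : ValGroup p n) : Prop :=
  ∀ i : ℕ, i ≤ n → ∀ x : J.B, ((i : ℕ∞) ≤ J.v x ↔ ∃ y : J.B, p ^ i • y = x)

/-- The key extension step, in terms of graphs. -/
theorem exists_ext {p n : ℕ} (hp : p.Prime) (hn : 1 ≤ n) (B J : ValGroup p n) (hJ : Cond3 J)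
    (G₀ : AddSubgroup (B.B × J.B)) (h₀ : ∀ z ∈ G₀, B.v z.1 ≤ J.v z.2) :
    ∃ h : ValHom B J, ∀ z ∈ G₀, h.f z.1 = z.2 := by
  obtain ⟨G, hle, hmax⟩ := zorn_le_nonempty₀
    {G : AddSubgroup (B.B × J.B) | ∀ z ∈ G, B.v z.1 ≤ J.v z.2} (by
      intro c hc hchain y hy
      refine ⟨sSup c, ?_, fun z hz => le_sSup hz⟩
      intro z hz
      obtain ⟨s, hs, hzs⟩ := (AddSubgroup.mem_sSup_of_directedOn ⟨y, hy⟩ hchain.directedOn).mp hz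
      exact hc hs z hzs) G₀ h₀
  have hG : ∀ z ∈ G, B.v z.1 ≤ J.v z.2 := hmax.prop
  have huniq : ∀ x y y', (x, y) ∈ G → (x, y') ∈ G → y = y' := by
    intro x y y' h h'
    have := hG _ (G.sub_mem h h')
    simp only [Prod.fst_sub, Prod.snd_sub, sub_self, B.v_zero, top_le_iff] at this
    exact sub_eq_zero.mp (J.eq_zero_of_top this)
  have htot : ∀ x, ∃ y, (x, y) ∈ G := by
    by_contra! hcon
    obtain ⟨x, hx⟩ := hcon
    -- find b₀ outside the domain with p b₀ in the domain
    have hex : ∃ m : ℕ, ∃ y, (p ^ m • x, y) ∈ G :=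
      ⟨n, 0, by rw [B.pow_smul hn]; exact G.zero_mem⟩
    obtain ⟨b₀, hb₀, d₀, hd₀⟩ : ∃ b₀, (∀ y, (b₀, y) ∉ G) ∧ ∃ d, (p • b₀, d) ∈ G := by
      classical
      have hs := Nat.find_spec hex
      have hm := fun k => Nat.find_min hex (m := k)
      generalize Nat.find hex = m at hs hm
      cases m with
      | zero => simp at hs; obtain ⟨y, hy⟩ := hs; exact absurd hy (hx y)
      | succ m =>
        refine ⟨p ^ m • x, ?_, ?_⟩
        · have := hm m (Nat.lt_succ_self m)
          push Not at this
          exact this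
        · rw [← mul_smul, ← pow_succ']; exact hs
    obtain ⟨b, ⟨a, a', ha, rfl⟩, hbmax⟩ := B.exists_max
      {b | ∃ a a', (a, a') ∈ G ∧ b = b₀ + a} ⟨b₀, 0, 0, G.zero_mem, by simp⟩
    set b := b₀ + a with hb
    have hbG : ∀ y, (b, y) ∉ G := by
      intro y hy
      have := G.sub_mem hy ha
      rw [Prod.mk_sub_mk, hb, add_sub_cancel_right] at this
      exact hb₀ _ this
    obtain ⟨d, hd⟩ : ∃ d, (p • b, d) ∈ G := by
      refine ⟨d₀ + p • a', ?_⟩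
      have := G.add_mem hd₀ (G.nsmul_mem ha p)
      rwa [Prod.smul_mk, Prod.mk_add_mk, ← smul_add] at this
    have hbne : b ≠ 0 := by
      intro h
      exact hbG 0 (by rw [h]; exact G.zero_mem)
    have hbn := B.bounded b hbne
    obtain ⟨m, hm⟩ := ENat.ne_top_iff_exists.mp (ne_top_of_le_ne_top (ENat.natCast_ne_top _) hbn)
    have hmn : m + 1 ≤ n := by
      rw [← hm] at hbn
      have : m ≤ n - 1 := by exact_mod_cast hbn
      omega
    obtain ⟨e, he⟩ : ∃ e, p ^ (m + 1) • e = d := by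
      apply (hJ (m + 1) hmn d).mp
      have h1 := (B.succ_le b).trans (hG _ hd)
      rw [← hm] at h1
      exact_mod_cast h1
    obtain ⟨c, hcm, hcd⟩ : ∃ c, B.v b ≤ J.v c ∧ p • c = d :=
      ⟨p ^ m • e, by rw [← hm]; exact J.pow_le e m, by rw [← mul_smul, ← pow_succ']; exact he⟩
    have hbig : (G ⊔ AddSubgroup.zmultiples (b, c)) ∈
        {G : AddSubgroup (B.B × J.B) | ∀ z ∈ G, B.v z.1 ≤ J.v z.2} := by
      intro z hz
      obtain ⟨⟨x, y⟩, hxy, w, hw, rfl⟩ := AddSubgroup.mem_sup.mp hz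
      obtain ⟨k, rfl⟩ := AddSubgroup.mem_zmultiples_iff.mp hw
      by_cases hk : (p : ℤ) ∣ k
      · obtain ⟨k, rfl⟩ := hk
        apply hG
        refine G.add_mem hxy ?_
        rw [mul_comm, mul_smul, natCast_zsmul]
        refine G.zsmul_mem ?_ k
        rw [Prod.smul_mk, hcd]
        exact hd
      · simp only [Prod.fst_add, Prod.snd_add, Prod.smul_fst, Prod.smul_snd]
        obtain ⟨l, hl⟩ := B.exists_inv hp hn hk
        have h1 : B.v (x + k • b) ≤ B.v b := by
          refine (B.zsmul_le hp hn _ l).trans (hbmax _ ⟨a + l • x, a' + l • y, ?_, ?_⟩)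
          · exact G.add_mem ha (G.zsmul_mem hxy l)
          · rw [smul_add, hl, hb]; abel
        have h2 : B.v (x + k • b) ≤ B.v x := by
          have h3 := B.add_le (x + k • b) (-(k • b))
          rw [add_neg_cancel_right] at h3
          refine le_trans (le_min le_rfl (h1.trans ?_)) h3
          exact (B.zsmul_le hp hn b k).trans (B.neg_le hp hn _)
        refine le_trans (le_min (h2.trans (hG _ hxy)) (h1.trans (hcm.trans ?_))) (J.add_le _ _)
        exact J.zsmul_le hp hn c k
    have hle2 := hmax.le_of_ge hbig le_sup_left
    exact hbG c (hle2 (AddSubgroup.mem_sup_right (AddSubgroup.mem_zmultiples _)))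
  choose f hf using htot
  refine ⟨⟨AddMonoidHom.mk' f fun x y => ?_, fun x => hG _ (hf x)⟩, fun z hz => ?_⟩
  · exact huniq _ _ _ (hf _) (G.add_mem (hf x) (hf y))
  · exact huniq _ _ _ (hf _) (hle hz)

/-- The set-theoretic kernel. -/
def kerObj {p n : ℕ} {A B : ValGroup p n} (ψ : ValHom A B) : ValGroup p n where
  B := ψ.f.ker
  v x := A.v x.1
  add_le x y := A.add_le _ _
  smul_lt x := A.smul_lt _
  bounded x hx := A.bounded _ (by simpa using hx)

theorem isometry_of_kernel {p n : ℕ} {A B : ValGroup p n} {ι : ValHom A B}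
    (h : IsKernelMor ι) (x : A.B) : B.v (ι.f x) = A.v x := by
  obtain ⟨C, ψ, h0, hu⟩ := h
  let inc : ValHom (kerObj ψ) B := ⟨ψ.f.ker.subtype, fun _ => le_rfl⟩
  obtain ⟨σ, hσ, -⟩ := hu (kerObj ψ) inc (by ext x; exact x.2)
  have h0' : ∀ a, ψ.f (ι.f a) = 0 := fun a => DFunLike.congr_fun (congrArg ValHom.f h0) a
  let c : ValHom A (kerObj ψ) := ⟨ι.f.codRestrict ψ.f.ker h0', fun a => ι.le a⟩
  have hid : σ.comp c = ValHom.id A := by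
    refine (hu A ι h0).unique ?_ ?_
    · ext a
      exact DFunLike.congr_fun (congrArg ValHom.f hσ) (c.f a)
    · rfl
  have hx : σ.f (c.f x) = x := DFunLike.congr_fun (congrArg ValHom.f hid) x
  apply le_antisymm _ (ι.le x)
  calc B.v (ι.f x) ≤ A.v (σ.f (c.f x)) := σ.le (c.f x)
    _ = A.v x := by rw [hx]

theorem inj_of_cond3 {p n : ℕ} (hp : p.Prime) (hn : 1 ≤ n) {J : ValGroup p n} (hJ : Cond3 J) :
    IsInjObj J := by
  intro A B ι hι g
  obtain ⟨h, hh⟩ := exists_ext hp hn B J hJ (ι.f.prod g.f).range (by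
    rintro _ ⟨a, rfl⟩
    show B.v (ι.f a) ≤ J.v (g.f a)
    rw [isometry_of_kernel hι]
    exact g.le a)
  refine ⟨h, ?_⟩
  ext a
  exact hh _ ⟨a, rfl⟩

section quot
variable {p n : ℕ} (B : ValGroup p n) (S : AddSubgroup B.B)

theorem exists_rep (q : B.B ⧸ S) : ∃ b : B.B, (QuotientAddGroup.mk b : B.B ⧸ S) = q ∧
    ∀ c : B.B, (QuotientAddGroup.mk c : B.B ⧸ S) = q → B.v c ≤ B.v b :=
  B.exists_max {b | (QuotientAddGroup.mk b : B.B ⧸ S) = q} (QuotientAddGroup.mk_surjective q)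

/-- A representative of maximal value. -/
noncomputable def rep (q : B.B ⧸ S) : B.B := (exists_rep B S q).choose

theorem mk_rep (q : B.B ⧸ S) : (QuotientAddGroup.mk (rep B S q) : B.B ⧸ S) = q :=
  (exists_rep B S q).choose_spec.1

theorem le_rep (c : B.B) : B.v c ≤ B.v (rep B S (QuotientAddGroup.mk c)) :=
  (exists_rep B S _).choose_spec.2 c rfl

/-- The quotient object. -/
noncomputable def quotObj : ValGroup p n where
  B := B.B ⧸ S
  v q := B.v (rep B S q)
  add_le x y := by
    refine (B.add_le _ _).trans ((le_rep B S _).trans (le_of_eq ?_))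
    rw [QuotientAddGroup.mk_add, mk_rep, mk_rep]
  smul_lt x := by
    have h : B.v (p • rep B S x) ≤ B.v (rep B S (p • x)) := by
      refine (le_rep B S _).trans (le_of_eq ?_)
      rw [QuotientAddGroup.mk_nsmul, mk_rep]
    rcases B.smul_lt (rep B S x) with h1 | h1
    · exact Or.inl (h1.trans_le h)
    · rw [h1.2] at h
      exact Or.inr ⟨h1.1, top_le_iff.mp h⟩
  bounded x hx := by
    apply B.bounded
    intro h
    apply hx
    rw [← mk_rep B S x, h]
    rfl

end quot

theorem kernel_of_isometry {p n : ℕ} {A B : ValGroup p n} (ι : ValHom A B)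
    (h : ∀ x, B.v (ι.f x) = A.v x) : IsKernelMor ι := by
  have hinj : Function.Injective ι.f := by
    rw [injective_iff_map_eq_zero]
    intro a ha
    apply A.eq_zero_of_top
    rw [← h, ha, B.v_zero]
  refine ⟨quotObj B ι.f.range, ⟨QuotientAddGroup.mk' ι.f.range, fun x => le_rep B _ x⟩, ?_, ?_⟩
  · ext a
    exact (QuotientAddGroup.eq_zero_iff (N := ι.f.range) (ι.f a)).mpr ⟨a, rfl⟩
  · intro C ρ hρ
    have hr : ∀ c, ∃ a, ι.f a = ρ.f c := by
      intro c
      have : (QuotientAddGroup.mk (ρ.f c) : B.B ⧸ ι.f.range) = 0 :=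
        DFunLike.congr_fun (congrArg ValHom.f hρ) c
      exact (QuotientAddGroup.eq_zero_iff _).mp this
    choose s hs using hr
    refine ⟨⟨AddMonoidHom.mk' s fun x y => hinj ?_, fun x => ?_⟩, ?_, ?_⟩
    · rw [map_add, hs, hs, hs, map_add]
    · show C.v x ≤ A.v (s x)
      rw [← h, hs]
      exact ρ.le x
    · ext c
      exact hs c
    · intro τ hτ
      ext c
      apply hinj
      have : ι.f (τ.f c) = ρ.f c := DFunLike.congr_fun (congrArg ValHom.f hτ) c
      rw [this]
      exact (hs c).symm

theorem le_pHeight (p : ℕ) {G : Type} [AddCommGroup G] (x : G) (i : ℕ) :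
    (i : ℕ∞) ≤ pHeight p x ↔ ∃ y : G, p ^ i • y = x := by
  constructor
  · intro h
    by_contra hcon
    cases i with
    | zero => exact hcon ⟨x, by simp⟩
    | succ i =>
      have : pHeight p x ≤ (i : ℕ∞) := by
        refine iSup₂_le fun m hm => ?_
        obtain ⟨y, hy⟩ := hm
        have hlt : m < i + 1 := by
          by_contra! hle
          obtain ⟨k, rfl⟩ := Nat.exists_eq_add_of_le hle
          exact hcon ⟨p ^ k • y, by rw [← mul_smul, ← pow_add, hy]⟩
        exact_mod_cast Nat.lt_succ_iff.mp hlt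
      have h2 := h.trans this
      have h3 : i + 1 ≤ i := by exact_mod_cast h2
      omega
  · intro h
    exact le_iSup₂ (f := fun (m : ℕ) (_ : ∃ y : G, p ^ m • y = x) => (m : ℕ∞)) i h

theorem enat_le_of {a b : ℕ∞} (h : ∀ i : ℕ, (i : ℕ∞) ≤ a → (i : ℕ∞) ≤ b) : a ≤ b :=
  ENat.forall_natCast_le_iff_le.mp h

/-- A group killed by `p^n` with its height valuation. -/
noncomputable def heightObj (p n : ℕ) (hn : 1 ≤ n) (G : Type) [AddCommGroup G]
    (hG : ∀ x : G, p ^ n • x = 0) : ValGroup p n where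
  B := G
  v := pHeight p
  add_le x y := by
    apply enat_le_of
    intro i hi
    obtain ⟨a, ha⟩ := (le_pHeight p x i).mp (hi.trans (min_le_left _ _))
    obtain ⟨b, hb⟩ := (le_pHeight p y i).mp (hi.trans (min_le_right _ _))
    exact (le_pHeight p _ i).mpr ⟨a + b, by rw [smul_add, ha, hb]⟩
  smul_lt x := by
    have key : pHeight p x + 1 ≤ pHeight p (p • x) := by
      apply enat_le_of
      intro i hi
      cases i with
      | zero => simp
      | succ i =>
        have hi' : (i : ℕ∞) ≤ pHeight p x := by
          push_cast at hi
          exact (ENat.add_le_add_iff_right (by simp)).mp hi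
        obtain ⟨a, ha⟩ := (le_pHeight p x i).mp hi'
        exact (le_pHeight p _ _).mpr ⟨a, by rw [pow_succ', mul_smul, ha]⟩
    by_cases h : pHeight p x = ⊤
    · right
      rw [h] at key
      exact ⟨h, top_le_iff.mp (by simpa using key)⟩
    · left
      exact lt_of_lt_of_le (ENat.lt_add_one_iff h |>.mpr le_rfl) key
  bounded x hx := by
    by_contra! hlt
    apply hx
    have : (n : ℕ∞) ≤ pHeight p x := by
      have h1 := Order.add_one_le_of_lt hlt
      have h2 : ((n - 1 : ℕ) : ℕ∞) + 1 = (n : ℕ∞) := by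
        exact_mod_cast Nat.sub_add_cancel hn
      rwa [h2] at h1
    obtain ⟨y, hy⟩ := (le_pHeight p x n).mp this
    rw [← hy, hG]

theorem cond3_heightObj (p n : ℕ) (hn : 1 ≤ n) (G : Type) [AddCommGroup G]
    (hG : ∀ x : G, p ^ n • x = 0) : Cond3 (heightObj p n hn G hG) :=
  fun i _ x => le_pHeight p x i

theorem zmod_kill {p m n : ℕ} (h : m ≤ n) (x : ZMod (p ^ m)) : p ^ n • x = 0 := by
  obtain ⟨k, rfl⟩ := Nat.exists_eq_add_of_le h
  have h0 : ((p ^ m : ℕ) : ZMod (p ^ m)) = 0 := ZMod.natCast_self _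
  rw [nsmul_eq_mul, pow_add, Nat.cast_mul, h0, zero_mul, zero_mul]

theorem exists_test {p n : ℕ} (hp : p.Prime) (hn : 1 ≤ n) (B : ValGroup p n) (x : B.B)
    (hx : x ≠ 0) : ∃ (G : Type) (_ : AddCommGroup G) (_ : ∀ y : G, p ^ n • y = 0) (f : B.B →+ G),
      (∀ b, B.v b ≤ pHeight p (f b)) ∧ pHeight p (f x) ≤ B.v x := by
  have hbn := B.bounded x hx
  obtain ⟨m, hm⟩ := ENat.ne_top_iff_exists.mp (ne_top_of_le_ne_top (ENat.natCast_ne_top _) hbn)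
  have hmn : m + 1 ≤ n := by
    rw [← hm] at hbn
    have : m ≤ n - 1 := by exact_mod_cast hbn
    omega
  have hG : ∀ y : ZMod (p ^ (m + 1)), p ^ n • y = 0 := zmod_kill hmn
  set u : ZMod (p ^ (m + 1)) := p ^ m • (1 : ZMod (p ^ (m + 1))) with hu
  have hpu : p • u = 0 := by
    rw [hu, ← mul_smul, ← pow_succ']
    exact zmod_kill le_rfl _
  have hune : u ≠ 0 := by
    rw [hu, nsmul_eq_mul, mul_one]
    intro h0
    rw [ZMod.natCast_eq_zero_iff] at h0
    have := (Nat.pow_dvd_pow_iff_le_right hp.one_lt).mp h0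
    omega
  obtain ⟨f, hf⟩ := exists_ext hp hn B (heightObj p n hn _ hG) (cond3_heightObj p n hn _ hG)
    (AddSubgroup.zmultiples ((x, u) : B.B × ZMod (p ^ (m + 1)))) (by
      intro z hz
      obtain ⟨k, rfl⟩ := AddSubgroup.mem_zmultiples_iff.mp hz
      by_cases hk : (p : ℤ) ∣ k
      · obtain ⟨k, rfl⟩ := hk
        have : ((p : ℤ) * k) • u = 0 := by
          rw [mul_comm, mul_smul, natCast_zsmul, hpu, smul_zero]
        show _ ≤ (heightObj p n hn _ hG).v (((p : ℤ) * k) • u)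
        rw [this]
        refine le_trans le_top (le_of_eq (ValGroup.v_zero _).symm)
      · obtain ⟨l, hl⟩ := B.exists_inv hp hn hk
        have h1 : B.v (k • x) ≤ B.v x := by
          have := B.zsmul_le hp hn (k • x) l
          rwa [hl] at this
        refine le_trans h1 ?_
        rw [← hm]
        exact (le_pHeight p _ _).mpr ⟨k • 1, by rw [smul_comm]; rfl⟩)
  refine ⟨_, _, hG, f.f, f.le, ?_⟩
  have hfx : f.f x = u := hf _ (AddSubgroup.mem_zmultiples _)
  have : ¬ ((m + 1 : ℕ) : ℕ∞) ≤ pHeight p u := by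
    rw [le_pHeight]
    rintro ⟨y, hy⟩
    exact hune (by rw [← hy]; exact zmod_kill le_rfl _)
  have h2 : pHeight p u ≤ B.v x := by
    rw [← hm]
    push_cast at this
    rw [not_le] at this
    exact (ENat.lt_add_one_iff (by simp)).mp this
  exact (congrArg (pHeight p) hfx).trans_le h2

theorem enough {p n : ℕ} (hp : p.Prime) (hn : 1 ≤ n) (B : ValGroup p n) :
    ∃ (J : ValGroup p n) (ι : ValHom B J), Cond3 J ∧ IsKernelMor ι := by
  choose G inst hG f hf hfx using fun x : {x : B.B // x ≠ 0} => exists_test hp hn B x.1 x.2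
  have hP : ∀ y : (∀ x, G x), p ^ n • y = 0 := fun y => funext fun x => hG x (y x)
  let J := heightObj p n hn (∀ x, G x) hP
  let F : B.B →+ (∀ x, G x) := AddMonoidHom.pi f
  have hF : ∀ b, B.v b ≤ pHeight p (F b) := by
    intro b
    apply enat_le_of
    intro i hi
    choose y hy using fun x => (le_pHeight p (f x b) i).mp (hi.trans (hf x b))
    exact (le_pHeight p _ _).mpr ⟨y, funext hy⟩
  refine ⟨J, ⟨F, hF⟩, cond3_heightObj _ _ _ _ _, kernel_of_isometry _ fun b => ?_⟩
  apply le_antisymm _ (hF b)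
  by_cases hb : b = 0
  · rw [hb, B.v_zero]; exact le_top
  · refine le_trans ?_ (hfx ⟨b, hb⟩)
    apply enat_le_of
    intro i hi
    obtain ⟨y, hy⟩ := (le_pHeight p (F b) i).mp hi
    exact (le_pHeight p _ _).mpr ⟨y ⟨b, hb⟩, congrFun hy ⟨b, hb⟩⟩

theorem cond3_of_inj {p n : ℕ} (hp : p.Prime) (hn : 1 ≤ n) {B : ValGroup p n}
    (hB : IsInjObj B) : Cond3 B := by
  obtain ⟨J, ι, hJ, hι⟩ := enough hp hn B
  obtain ⟨r, hr⟩ := hB B J ι hι (ValHom.id B)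
  intro i hi x
  constructor
  · intro h
    obtain ⟨y, hy⟩ := (hJ i hi (ι.f x)).mp (h.trans (ι.le x))
    refine ⟨r.f y, ?_⟩
    rw [← map_nsmul, hy]
    exact DFunLike.congr_fun (congrArg ValHom.f hr) x
  · rintro ⟨y, rfl⟩
    exact B.pow_le y i

theorem cond3_iff_height {p n : ℕ} (hn : 1 ≤ n) (B : ValGroup p n) :
    Cond3 B ↔ ∀ x : B.B, B.v x = pHeight p x := by
  constructor
  · intro h x
    apply le_antisymm
    · apply enat_le_of
      intro i hi
      rw [le_pHeight]
      by_cases hin : i ≤ n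
      · exact (h i hin x).mp hi
      · have : x = 0 := B.eq_zero_of_le hn (le_trans (by exact_mod_cast (not_le.mp hin).le) hi)
        exact ⟨0, by rw [smul_zero, this]⟩
    · apply enat_le_of
      intro i hi
      obtain ⟨y, rfl⟩ := (le_pHeight p x i).mp hi
      exact B.pow_le y i
  · intro h i _ x
    rw [h, le_pHeight]

end PVal

open PVal in
/-- As an exact category, `𝒱ₚⁿ` has enough injectives; and an object `B`
is injective if and only if its valuation coincides with the `p`-height function, if and
only if `B(i) = pⁱ • B` for all `0 ≤ i ≤ n`. -/
theorem vpn_enough_injectives (p n : ℕ) (hp : p.Prime) (hn : 1 ≤ n) :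
    -- enough injectives
    (∀ B : ValGroup p n, ∃ (J : ValGroup p n) (ι : ValHom B J),
      IsInjObj J ∧ IsKernelMor ι) ∧
    -- characterization of the injective objects
    (∀ B : ValGroup p n,
      (IsInjObj B ↔ ∀ x : B.B, B.v x = pHeight p x) ∧
      (IsInjObj B ↔ ∀ i : ℕ, i ≤ n → ∀ x : B.B,
        ((i : ℕ∞) ≤ B.v x ↔ ∃ y : B.B, p ^ i • y = x))) := by
  have key : ∀ B : ValGroup p n, IsInjObj B ↔ Cond3 B := fun B =>
    ⟨cond3_of_inj hp hn, inj_of_cond3 hp hn⟩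
  refine ⟨fun B => ?_, fun B => ⟨(key B).trans (cond3_iff_height hn B), key B⟩⟩
  obtain ⟨J, ι, hJ, hι⟩ := enough hp hn B
  exact ⟨J, ι, (key J).mpr hJ, hι⟩
end
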